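/- Let γ > 0, 1 < α < 2, p > 1, a > 0, b > 0, and let β ∈ [α/2, α). Suppose w ∈ C¹([0,∞)), w ≢ 0, the function t ↦ ₀I_t^{2−α}(w(s) − w'(0)s − w(0)) is in AC²([0,T]) for every T > 0, and for almost every t ≥ 0 one has (₀D_t^α w)(t) + a·w(t) ≥ b·(₀I_t^γ (|w|^p))(t). If w'(0) = 0, then liminf_{t→+∞} t^{1−γ−β}·(₀I_t^β w)(t) > 0. -/

import Mathlib

/-!
Let `k_σ(t) = t ^ (σ - 1) / Γ(σ)` and `K_σ = ∑ⱼ (-a)ʲ k_{σ+αj}`. By variation of constants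
`I^β w = w(0) K_{β+1} + w'(0) K_{β+2} + K_{β+α} * (D^α w + a w)`. The kernels `K_σ` with
`σ ≥ 3α/2` are nonnegative, so the differential inequality gives
`I^β w ≥ w(0) K_{β+1} + b K_{β+γ+α} * |w|^p`. For `σ > α / 2` the kernel `K_σ` is of the order of
`k_{max(α/2, σ-α)}` at most. Hence `w(0) K_{β+1}` is negligible against `t ^ (β + γ - 1)`, whereas
`a K_{β+γ+α} = k_{β+γ} - K_{β+γ}` is comparable to it, and so is its convolution with `|w|^p`.

For `α = 2` the kernels are fractional integrals of trigonometric functions, and positivity and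
growth are explicit. Subordination carries both to every `α ≤ 2`: a positive kernel maps `k_κ` to
`k_{μκ}` for all `κ > 0`, where `μ = α / 2`. Only approximations of this kernel are used, with
elementary densities for which the image of `k_κ` involves the partial products of Euler's formula
for `1 / Γ`.
-/

open MeasureTheory Filter

/-- Riemann–Liouville fractional integral of order `σ` based at `0`:
`(₀I_t^σ f)(t) = (1/Γ(σ)) ∫₀ᵗ (t−s)^{σ−1} f(s) ds`. -/
noncomputable def rlInt (σ : ℝ) (f : ℝ → ℝ) (t : ℝ) : ℝ :=
  (1 / Real.Gamma σ) * ∫ s in (0:ℝ)..t, (t - s) ^ (σ - 1) * f s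

/-- The function whose second derivative is the (left) Caputo derivative of order `α ∈ (1,2]`:
for `α < 2` it is `₀I_t^{2−α}(w(s) − w'(0)·s − w(0))`, and for `α = 2` it is `w` itself. -/
noncomputable def capKernel (α : ℝ) (w : ℝ → ℝ) : ℝ → ℝ :=
  if α = 2 then w else rlInt (2 - α) (fun s => w s - deriv w 0 * s - w 0)

/-- Left Caputo fractional derivative of order `α ∈ (1,2]`:
`(₀D_t^α w)(t) = (d²/dt²)[ ₀I_t^{2−α}(w(s) − w'(0)s − w(0)) ](t)` (second derivative of `w` when `α = 2`). -/
noncomputable def caputoD (α : ℝ) (w : ℝ → ℝ) : ℝ → ℝ :=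
  deriv (deriv (capKernel α w))

/-- `g ∈ AC²([0,T])`: `g` is differentiable on `[0,T]`, its second derivative is integrable,
and `g'` is the integral of `g''` (i.e. `g'` is absolutely continuous). -/
def AC2On (g : ℝ → ℝ) (T : ℝ) : Prop :=
  (∀ t ∈ Set.Icc (0:ℝ) T, DifferentiableAt ℝ g t) ∧
  IntervalIntegrable (deriv (deriv g)) volume 0 T ∧
  ∀ t ∈ Set.Icc (0:ℝ) T, deriv g t = deriv g 0 + ∫ s in (0:ℝ)..t, deriv (deriv g) s

/-! ### Euler's product for `1 / Γ` -/

lemma succ_mul_multichoose_succ (s : ℝ) (m : ℕ) :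
    (m + 1 : ℝ) * Ring.multichoose s (m + 1) = (s + m) * Ring.multichoose s m := by
  have h (n : ℕ) := Ring.factorial_nsmul_multichoose_eq_ascPochhammer s n
  simp only [nsmul_eq_mul, Polynomial.ascPochhammer_smeval_eq_eval] at h
  have hm : (m.factorial : ℝ) ≠ 0 := by positivity
  have h1 := h (m + 1)
  rw [ascPochhammer_succ_eval, ← h m, Nat.factorial_succ] at h1
  push_cast at h1
  exact mul_left_cancel₀ hm (by linear_combination h1)

lemma succ_mul_multichoose_succ_eq_mul_add_one (s : ℝ) (m : ℕ) :
    (m + 1 : ℝ) * Ring.multichoose s (m + 1) = s * Ring.multichoose (s + 1) m := by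
  induction m with
  | zero => simp
  | succ m ih =>
    have h1 := succ_mul_multichoose_succ s (m + 1)
    have h2 := succ_mul_multichoose_succ (s + 1) m
    have hm : (m + 1 : ℝ) ≠ 0 := by positivity
    push_cast at h1 ⊢
    rw [h1]
    exact mul_left_cancel₀ hm (by linear_combination (s + m + 1) * ih - s * h2)

lemma multichoose_nonneg {s : ℝ} (hs : 0 ≤ s) (m : ℕ) : 0 ≤ Ring.multichoose s m := by
  induction m with
  | zero => simp
  | succ m ih =>
    have h := succ_mul_multichoose_succ s m
    exact nonneg_of_mul_nonneg_right (h ▸ by positivity) (by positivity : (0 : ℝ) < m + 1)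

/-- Chu–Vandermonde, from `(1 - z) ^ (-x) (1 - z) ^ (-y) = (1 - z) ^ (-(x + y))`. -/
lemma multichoose_add (x y : ℝ) (m : ℕ) :
    Ring.multichoose (x + y) m = ∑ ij ∈ Finset.HasAntidiagonal.antidiagonal m,
      Ring.multichoose x ij.1 * Ring.multichoose y ij.2 := by
  have hneg (z : ℝ) (k : ℕ) : Ring.choose (-z) k = (-1) ^ k * Ring.multichoose z k := by
    rw [Ring.choose_neg', Int.negOnePow_def, Units.smul_def]
    simp
  have h := Ring.add_choose_eq (r := -x) (s := -y) m (Commute.all _ _)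
  rw [← neg_add, hneg] at h
  refine mul_left_cancel₀ (pow_ne_zero m (neg_ne_zero.2 one_ne_zero)) (h.trans ?_)
  rw [Finset.mul_sum]
  refine Finset.sum_congr rfl fun ij hij => ?_
  rw [hneg, hneg, ← Finset.HasAntidiagonal.mem_antidiagonal.1 hij, pow_add]
  ring

/-- The approximants of `1 / Γ(s)` in Euler's limit formula, up to the factor `m / (m + s)`. -/
noncomputable def invGammaSeq (s : ℝ) (m : ℕ) : ℝ :=
  (m : ℝ) ^ (1 - s) * Ring.multichoose s m

lemma invGammaSeq_nonneg {s : ℝ} (hs : 0 ≤ s) (m : ℕ) : 0 ≤ invGammaSeq s m :=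
  mul_nonneg (by positivity) (multichoose_nonneg hs m)

lemma factorial_mul_multichoose (s : ℝ) (m : ℕ) :
    m.factorial * Ring.multichoose s m = ∏ j ∈ Finset.range m, (s + j) := by
  induction m with
  | zero => simp
  | succ m ih =>
    rw [Finset.prod_range_succ, ← ih, Nat.factorial_succ]
    push_cast
    linear_combination (m.factorial : ℝ) * succ_mul_multichoose_succ s m

lemma tendsto_invGammaSeq {s : ℝ} (hs : 0 < s) :
    Tendsto (invGammaSeq s) atTop (nhds (1 / Real.Gamma s)) := by
  have h := (tendsto_natCast_div_add_atTop s).mul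
    ((Real.GammaSeq_tendsto_Gamma s).inv₀ (Real.Gamma_pos_of_pos hs).ne')
  rw [one_mul, ← one_div] at h
  refine h.congr' ?_
  filter_upwards [eventually_gt_atTop 0] with m hm
  have hm' : (0 : ℝ) < m := by exact_mod_cast hm
  have hsm : s + m ≠ 0 := by positivity
  rw [Real.GammaSeq, invGammaSeq, Finset.prod_range_succ, ← factorial_mul_multichoose,
    Real.rpow_sub hm', Real.rpow_one, add_comm (m : ℝ) s]
  field_simp

lemma one_add_div_add_one_le_rpow {s x : ℝ} (hs : 0 ≤ s) (hx : 0 < x) :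
    1 + s / (x + 1) ≤ ((x + 1) / x) ^ s := by
  have hlog : 1 / (x + 1) ≤ Real.log ((x + 1) / x) := by
    refine le_trans (le_of_eq ?_) (Real.one_sub_inv_le_log_of_pos (by positivity))
    field_simp
    ring
  calc 1 + s / (x + 1) ≤ Real.exp (s / (x + 1)) := by
        linarith [Real.add_one_le_exp (s / (x + 1))]
    _ ≤ Real.exp (Real.log ((x + 1) / x) * s) := by
        rw [Real.exp_le_exp, div_eq_mul_one_div, mul_comm]
        gcongr
    _ = ((x + 1) / x) ^ s := (Real.rpow_def_of_pos (by positivity) s).symm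

/-- The first `M` factors of `∏ (1 + s / j)` are bounded crudely, the others telescope. -/
lemma multichoose_add_one_le {s : ℝ} (hs : 0 ≤ s) {M n : ℕ} (hM : 0 < M) (hn : M ≤ n) :
    Ring.multichoose (s + 1) n ≤ (1 + s) ^ M * (n / M : ℝ) ^ s := by
  have hsucc (k : ℕ) : Ring.multichoose (s + 1) (k + 1)
      = (1 + s / (k + 1)) * Ring.multichoose (s + 1) k := by
    have h := succ_mul_multichoose_succ (s + 1) k
    field_simp
    linear_combination h
  have hcrude (k : ℕ) : Ring.multichoose (s + 1) k ≤ (1 + s) ^ k := by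
    induction k with
    | zero => simp
    | succ k ih =>
      rw [hsucc, pow_succ']
      have : 0 ≤ Ring.multichoose (s + 1) k := multichoose_nonneg (by positivity) k
      gcongr
      exact div_le_self hs (by linarith [Nat.cast_nonneg (α := ℝ) k])
  have hM' : (0 : ℝ) < M := by exact_mod_cast hM
  induction n, hn using Nat.le_induction with
  | base => simpa [div_self hM'.ne'] using hcrude M
  | succ n hn ih =>
    have hn' : (0 : ℝ) < n := by exact_mod_cast hM.trans_le hn
    have : 0 ≤ Ring.multichoose (s + 1) n := multichoose_nonneg (by positivity) n
    calc Ring.multichoose (s + 1) (n + 1)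
        = (1 + s / (n + 1)) * Ring.multichoose (s + 1) n := hsucc n
      _ ≤ ((n + 1) / n : ℝ) ^ s * ((1 + s) ^ M * (n / M : ℝ) ^ s) := by
        gcongr
        exact one_add_div_add_one_le_rpow hs hn'
      _ = (1 + s) ^ M * (((n + 1) / n : ℝ) * (n / M)) ^ s := by
        rw [Real.mul_rpow (by positivity) (by positivity)]
        ring
      _ = (1 + s) ^ M * ((n + 1 : ℕ) / M : ℝ) ^ s := by
        rw [div_mul_div_cancel₀ hn'.ne', Nat.cast_succ]

lemma invGammaSeq_succ_le {s : ℝ} (hs : 0 < s) {M n : ℕ} (hM : 0 < M) (hn : M ≤ n) :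
    invGammaSeq s (n + 1) ≤ (1 + s) ^ (M + 1) * (1 / M : ℝ) ^ s := by
  have hM' : (0 : ℝ) < M := by exact_mod_cast hM
  have hmul : invGammaSeq s (n + 1)
      = (n + 1 : ℝ) ^ (-s) * (s * Ring.multichoose (s + 1) n) := by
    rw [invGammaSeq, ← succ_mul_multichoose_succ_eq_mul_add_one, sub_eq_neg_add,
      Real.rpow_add_one (by positivity)]
    push_cast
    ring
  have hratio : (n + 1 : ℝ) ^ (-s) * (n / M : ℝ) ^ s ≤ (1 / M : ℝ) ^ s := by
    rw [Real.rpow_neg (by positivity), ← Real.inv_rpow (by positivity),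
      ← Real.mul_rpow (by positivity) (by positivity)]
    refine Real.rpow_le_rpow (by positivity) ?_ hs.le
    rw [← div_eq_inv_mul, div_div, div_le_div_iff₀ (by positivity) hM']
    nlinarith
  calc invGammaSeq s (n + 1)
      ≤ (n + 1 : ℝ) ^ (-s) * ((1 + s) * ((1 + s) ^ M * (n / M : ℝ) ^ s)) := by
        rw [hmul]
        have := multichoose_nonneg (by positivity : 0 ≤ s + 1) n
        gcongr
        · linarith
        · exact multichoose_add_one_le hs.le hM hn
    _ = (1 + s) ^ (M + 1) * ((n + 1 : ℝ) ^ (-s) * (n / M : ℝ) ^ s) := by ring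
    _ ≤ (1 + s) ^ (M + 1) * (1 / M : ℝ) ^ s := by gcongr

/-- Since `R` may be arbitrarily small, the approximants decay faster than any exponential in `s`,
uniformly in `m`. -/
lemma exists_forall_invGammaSeq_le {R : ℝ} (hR : 0 < R) :
    ∃ C > 0, ∀ᶠ m in atTop, ∀ s > 0, invGammaSeq s m ≤ C * R ^ s := by
  obtain ⟨M, hM⟩ := exists_nat_ge (Real.exp 1 / R + 1)
  have hM1 : (1 : ℝ) ≤ M := le_trans (by linarith [div_pos (Real.exp_pos 1) hR]) hM
  have hMR : Real.exp 1 / M ≤ R := by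
    rw [div_le_iff₀ (by linarith), mul_comm, ← div_le_iff₀ hR]
    linarith
  refine ⟨(M + 1).factorial * Real.exp 1, by positivity, ?_⟩
  filter_upwards [eventually_ge_atTop (M + 1)] with m hm s hs
  obtain ⟨n, rfl⟩ : ∃ n, m = n + 1 := ⟨m - 1, by omega⟩
  have hexp : (1 + s) ^ (M + 1) ≤ (M + 1).factorial * Real.exp (1 + s) := by
    have := Real.pow_div_factorial_le_exp (1 + s) (by linarith) (M + 1)
    rwa [div_le_iff₀ (by positivity), mul_comm] at this
  calc invGammaSeq s (n + 1) ≤ (1 + s) ^ (M + 1) * (1 / M : ℝ) ^ s :=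
        invGammaSeq_succ_le hs (by exact_mod_cast hM1) (by omega)
    _ ≤ (M + 1).factorial * Real.exp (1 + s) * (1 / M : ℝ) ^ s := by gcongr
    _ = (M + 1).factorial * Real.exp 1 * (Real.exp 1 / M) ^ s := by
        rw [Real.exp_add, div_eq_mul_one_div (Real.exp 1), Real.mul_rpow (by positivity)
          (by positivity), ← Real.exp_mul, one_mul]
        ring
    _ ≤ (M + 1).factorial * Real.exp 1 * R ^ s := by gcongr

lemma exists_inv_Gamma_le_rpow {R : ℝ} (hR : 0 < R) :
    ∃ C > 0, ∀ s > 0, 1 / Real.Gamma s ≤ C * R ^ s := by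
  obtain ⟨C, hC, h⟩ := exists_forall_invGammaSeq_le hR
  exact ⟨C, hC, fun s hs => le_of_tendsto (tendsto_invGammaSeq hs) (h.mono fun _ hm => hm s hs)⟩

/-! ### Riemann–Liouville kernels and integrals -/

/-- The Riemann–Liouville kernel `t ^ (σ - 1) / Γ(σ)`, extended by `0` to `t ≤ 0` so that `rlInt σ`
is convolution with `rlKernel σ`. -/
noncomputable def rlKernel (σ t : ℝ) : ℝ :=
  if 0 < t then t ^ (σ - 1) / Real.Gamma σ else 0

lemma rlKernel_of_pos {σ t : ℝ} (ht : 0 < t) : rlKernel σ t = t ^ (σ - 1) / Real.Gamma σ :=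
  if_pos ht

lemma rlKernel_of_nonpos {σ t : ℝ} (ht : t ≤ 0) : rlKernel σ t = 0 :=
  if_neg ht.not_gt

lemma rlKernel_nonneg {σ : ℝ} (hσ : 0 ≤ σ) (t : ℝ) : 0 ≤ rlKernel σ t := by
  rcases le_or_gt t 0 with ht | ht
  · rw [rlKernel_of_nonpos ht]
  · rw [rlKernel_of_pos ht]
    exact div_nonneg (by positivity) (Real.Gamma_nonneg_of_nonneg hσ)

lemma measurable_rlKernel (σ : ℝ) : Measurable (rlKernel σ) :=
  Measurable.ite measurableSet_Ioi (by fun_prop) measurable_const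

lemma rlKernel_le_rlKernel {σ s t : ℝ} (hσ : 1 ≤ σ) (hst : s ≤ t) :
    rlKernel σ s ≤ rlKernel σ t := by
  rcases le_or_gt s 0 with hs | hs
  · rw [rlKernel_of_nonpos hs]
    exact rlKernel_nonneg (by linarith) t
  · have := Real.Gamma_pos_of_pos (by linarith : 0 < σ)
    rw [rlKernel_of_pos hs, rlKernel_of_pos (hs.trans_le hst)]
    gcongr

lemma intervalIntegrable_sub_rpow_mul_rpow {x y t : ℝ} (hx : 0 < x) (hy : 0 < y) (ht : 0 < t) :
    IntervalIntegrable (fun s : ℝ => (t - s) ^ (x - 1) * s ^ (y - 1)) volume 0 t := by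
  have h0 : IntervalIntegrable (fun s : ℝ => s ^ (y - 1) * (t - s) ^ (x - 1)) volume 0 (t / 2) := by
    refine IntervalIntegrable.mul_continuousOn
      (intervalIntegral.intervalIntegrable_rpow' (by linarith)) ?_
    rw [Set.uIcc_of_le (by linarith)]
    exact ContinuousOn.rpow_const (by fun_prop) fun s hs => Or.inl (by linarith [hs.2])
  have h1 : IntervalIntegrable (fun s : ℝ => (t - s) ^ (x - 1) * s ^ (y - 1)) volume (t / 2) t := by
    refine IntervalIntegrable.mul_continuousOn ?_ ?_
    · have := (intervalIntegral.intervalIntegrable_rpow' (a := 0) (b := t / 2)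
        (r := x - 1) (by linarith)).comp_sub_left t
      rw [sub_zero, sub_half] at this
      exact this.symm
    · rw [Set.uIcc_of_le (by linarith)]
      exact ContinuousOn.rpow_const (by fun_prop) fun s hs => Or.inl (by linarith [hs.1])
  simp only [mul_comm (_ ^ (y - 1))] at h0
  exact h0.trans h1

lemma integral_sub_rpow_mul_rpow {x y t : ℝ} (hx : 0 < x) (hy : 0 < y) (ht : 0 < t) :
    ∫ s in (0 : ℝ)..t, (t - s) ^ (x - 1) * s ^ (y - 1)
      = Real.Gamma x * Real.Gamma y / Real.Gamma (x + y) * t ^ (x + y - 1) := by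
  have h := Complex.betaIntegral_scaled (y : ℂ) (x : ℂ) ht
  rw [Complex.betaIntegral_eq_Gamma_mul_div _ _ (by simpa) (by simpa)] at h
  have hint : ∫ s in (0 : ℝ)..t, (s : ℂ) ^ ((y : ℂ) - 1) * ((t : ℂ) - s) ^ ((x : ℂ) - 1)
      = ((∫ s in (0 : ℝ)..t, (t - s) ^ (x - 1) * s ^ (y - 1) : ℝ) : ℂ) := by
    rw [← intervalIntegral.integral_ofReal]
    refine intervalIntegral.integral_congr fun s hs => ?_
    rw [Set.uIcc_of_le ht.le] at hs
    rw [Complex.ofReal_mul, Complex.ofReal_cpow (by linarith [hs.2]), Complex.ofReal_cpow hs.1]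
    push_cast
    ring
  have hΓ : (t : ℂ) ^ ((y : ℂ) + x - 1) *
        (Complex.Gamma y * Complex.Gamma x / Complex.Gamma (y + x))
      = ((Real.Gamma x * Real.Gamma y / Real.Gamma (x + y) * t ^ (x + y - 1) : ℝ) : ℂ) := by
    rw [Complex.ofReal_mul, Complex.ofReal_cpow ht.le, ← Complex.ofReal_add, Complex.Gamma_ofReal,
      Complex.Gamma_ofReal, Complex.Gamma_ofReal]
    push_cast
    rw [add_comm (y : ℂ) x, add_comm y x]
    ring
  rw [hint, hΓ] at h
  exact_mod_cast h

lemma rlKernel_sub_mul_rlKernel (x y t s : ℝ) :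
    rlKernel x (t - s) * rlKernel y s = (Set.Ioo 0 t).indicator
      (fun s => (Real.Gamma x * Real.Gamma y)⁻¹ * ((t - s) ^ (x - 1) * s ^ (y - 1))) s := by
  by_cases hs : s ∈ Set.Ioo 0 t
  · rw [Set.indicator_of_mem hs, rlKernel_of_pos (sub_pos.2 hs.2), rlKernel_of_pos hs.1,
      div_mul_div_comm, div_eq_inv_mul]
  · rw [Set.indicator_of_notMem hs, mul_eq_zero, rlKernel, rlKernel, ite_eq_right_iff,
      ite_eq_right_iff]
    by_cases h0 : 0 < s
    · exact Or.inl fun hts => absurd ⟨h0, sub_pos.1 hts⟩ hs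
    · exact Or.inr fun h => absurd h h0

lemma integrable_rlKernel_sub_mul_rlKernel {x y : ℝ} (hx : 0 < x) (hy : 0 < y) (t : ℝ) :
    Integrable fun s => rlKernel x (t - s) * rlKernel y s := by
  simp only [rlKernel_sub_mul_rlKernel]
  rw [integrable_indicator_iff measurableSet_Ioo]
  rcases le_or_gt t 0 with ht | ht
  · simp [Set.Ioo_eq_empty_of_le ht]
  · exact ((intervalIntegrable_iff_integrableOn_Ioo_of_le ht.le).1
      (intervalIntegrable_sub_rpow_mul_rpow hx hy ht)).const_mul _

lemma integral_rlKernel_sub_mul_rlKernel {x y : ℝ} (hx : 0 < x) (hy : 0 < y) (t : ℝ) :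
    ∫ s, rlKernel x (t - s) * rlKernel y s = rlKernel (x + y) t := by
  simp only [rlKernel_sub_mul_rlKernel]
  rw [integral_indicator measurableSet_Ioo]
  rcases le_or_gt t 0 with ht | ht
  · simp [Set.Ioo_eq_empty_of_le ht, rlKernel_of_nonpos ht]
  · have := Real.Gamma_pos_of_pos hx
    have := Real.Gamma_pos_of_pos hy
    rw [integral_const_mul, ← integral_Ioc_eq_integral_Ioo, ← intervalIntegral.integral_of_le ht.le,
      integral_sub_rpow_mul_rpow hx hy ht, rlKernel_of_pos ht]
    field_simp

lemma integrable_rlKernel_sub_mul_rlKernel_sub {x y : ℝ} (hx : 0 < x) (hy : 0 < y) (t r : ℝ) :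
    Integrable fun s => rlKernel x (t - s) * rlKernel y (s - r) := by
  simpa only [sub_sub_sub_cancel_right] using
    (integrable_rlKernel_sub_mul_rlKernel hx hy (t - r)).comp_sub_right r

lemma integral_rlKernel_sub_mul_rlKernel_sub {x y : ℝ} (hx : 0 < x) (hy : 0 < y) (t r : ℝ) :
    ∫ s, rlKernel x (t - s) * rlKernel y (s - r) = rlKernel (x + y) (t - r) := by
  rw [← integral_rlKernel_sub_mul_rlKernel hx hy,
    ← integral_sub_right_eq_self (fun s => rlKernel x (t - r - s) * rlKernel y s) r]
  simp only [sub_sub_sub_cancel_right]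

lemma rlInt_eq_intervalIntegral {t : ℝ} (ht : 0 ≤ t) (σ : ℝ) (f : ℝ → ℝ) :
    rlInt σ f t = ∫ s in (0 : ℝ)..t, rlKernel σ (t - s) * f s := by
  rw [rlInt, ← intervalIntegral.integral_const_mul, intervalIntegral.integral_of_le ht,
    intervalIntegral.integral_of_le ht, integral_Ioc_eq_integral_Ioo, integral_Ioc_eq_integral_Ioo]
  refine setIntegral_congr_fun measurableSet_Ioo fun s hs => ?_
  simp only [rlKernel_of_pos (sub_pos.2 hs.2)]
  ring

lemma rlInt_eq_integral {t T : ℝ} (ht : 0 ≤ t) (hT : t ≤ T) (σ : ℝ) (f : ℝ → ℝ) :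
    rlInt σ f t = ∫ s, rlKernel σ (t - s) * (Set.Ioo 0 T).indicator f s := by
  rw [rlInt_eq_intervalIntegral ht, intervalIntegral.integral_of_le ht,
    integral_Ioc_eq_integral_Ioo, ← integral_indicator measurableSet_Ioo]
  refine integral_congr_ae (ae_of_all _ fun s => ?_)
  simp only [Set.indicator, Set.mem_Ioo]
  split_ifs with h1 h2 h2
  · rfl
  · exact absurd ⟨h1.1, h1.2.trans_le hT⟩ h2
  · rw [rlKernel_of_nonpos (by linarith [not_lt.1 fun h => h1 ⟨h2.1, h⟩]), zero_mul]
  · rw [mul_zero]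

lemma rlInt_congr {σ t : ℝ} {f g : ℝ → ℝ} (ht : 0 ≤ t) (h : ∀ s ∈ Set.Ioo 0 t, f s = g s) :
    rlInt σ f t = rlInt σ g t := by
  simp only [rlInt_eq_integral ht le_rfl, Set.indicator_congr h]

lemma rlInt_one (f : ℝ → ℝ) (t : ℝ) : rlInt 1 f t = ∫ s in (0 : ℝ)..t, f s := by
  simp [rlInt]

lemma rlInt_eq_integral_of_forall_nonpos {t : ℝ} (ht : 0 ≤ t) (σ : ℝ) {f : ℝ → ℝ}
    (hf : ∀ s ≤ 0, f s = 0) : rlInt σ f t = ∫ s, rlKernel σ (t - s) * f s := by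
  rw [rlInt_eq_integral ht le_rfl]
  refine integral_congr_ae (ae_of_all _ fun s => ?_)
  dsimp only
  by_cases hs : s ∈ Set.Ioo 0 t
  · rw [Set.indicator_of_mem hs]
  · rw [Set.indicator_of_notMem hs, mul_zero]
    rcases le_or_gt s 0 with hs0 | hs0
    · rw [hf s hs0, mul_zero]
    · rw [rlKernel_of_nonpos (sub_nonpos.2 (not_lt.1 fun h => hs ⟨hs0, h⟩)), zero_mul]

lemma rlInt_rlKernel {x y t : ℝ} (hx : 0 < x) (hy : 0 < y) (ht : 0 ≤ t) :
    rlInt x (rlKernel y) t = rlKernel (x + y) t := by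
  rw [rlInt_eq_integral_of_forall_nonpos ht x fun s hs => rlKernel_of_nonpos hs,
    integral_rlKernel_sub_mul_rlKernel hx hy]

/-- For `1 ≤ x + y` the composed kernel is bounded, so that Fubini applies at every `t`. -/
lemma integrable_rlKernel_mul_rlKernel_mul {x y : ℝ} (hx : 0 < x) (hy : 0 < y) (hxy : 1 ≤ x + y)
    (t : ℝ) {f : ℝ → ℝ} (hf : Integrable f) (hf0 : ∀ r ≤ 0, f r = 0) :
    Integrable (fun p : ℝ × ℝ => rlKernel x (t - p.1) * (rlKernel y (p.1 - p.2) * f p.2))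
      (volume.prod volume) := by
  have hmeas := measurable_rlKernel
  have hms : AEStronglyMeasurable (fun p : ℝ × ℝ =>
      rlKernel x (t - p.1) * (rlKernel y (p.1 - p.2) * f p.2)) (volume.prod volume) :=
    (by fun_prop : Measurable fun p : ℝ × ℝ => rlKernel x (t - p.1)).aestronglyMeasurable.mul
      ((by fun_prop : Measurable fun p : ℝ × ℝ => rlKernel y (p.1 - p.2)).aestronglyMeasurable.mul
        hf.aestronglyMeasurable.comp_snd)
  rw [integrable_prod_iff' hms]
  refine ⟨ae_of_all _ fun r => by
    simpa only [mul_assoc] using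
      (integrable_rlKernel_sub_mul_rlKernel_sub hx hy t r).mul_const (f r), ?_⟩
  have hval (r : ℝ) : ∫ s, ‖rlKernel x (t - s) * (rlKernel y (s - r) * f r)‖
      = rlKernel (x + y) (t - r) * ‖f r‖ := by
    rw [← integral_rlKernel_sub_mul_rlKernel_sub hx hy, ← integral_mul_const]
    simp only [norm_mul, Real.norm_of_nonneg (rlKernel_nonneg hx.le _),
      Real.norm_of_nonneg (rlKernel_nonneg hy.le _), mul_assoc]
  simp only [hval]
  refine (hf.norm.const_mul (rlKernel (x + y) t)).mono'
    ((by fun_prop : Measurable fun r => rlKernel (x + y) (t - r)).aestronglyMeasurable.mul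
      hf.aestronglyMeasurable.norm) (ae_of_all _ fun r => ?_)
  rw [norm_mul, norm_norm, Real.norm_of_nonneg (rlKernel_nonneg (by linarith) _)]
  rcases le_or_gt r 0 with hr | hr
  · simp [hf0 r hr]
  · gcongr
    exact rlKernel_le_rlKernel hxy (by linarith)

lemma integrable_indicator_Ioo {t : ℝ} (ht : 0 ≤ t) {f : ℝ → ℝ}
    (hf : IntervalIntegrable f volume 0 t) : Integrable ((Set.Ioo 0 t).indicator f) :=
  (integrable_indicator_iff measurableSet_Ioo).2
    ((intervalIntegrable_iff_integrableOn_Ioo_of_le ht).1 hf)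

lemma indicator_Ioo_of_nonpos {r : ℝ} (hr : r ≤ 0) (t : ℝ) (f : ℝ → ℝ) :
    (Set.Ioo 0 t).indicator f r = 0 :=
  Set.indicator_of_notMem (fun h => h.1.not_ge hr) f

lemma rlInt_rlInt {x y t : ℝ} (hx : 0 < x) (hy : 0 < y) (hxy : 1 ≤ x + y) (ht : 0 ≤ t)
    {f : ℝ → ℝ} (hf : IntervalIntegrable f volume 0 t) :
    rlInt x (rlInt y f) t = rlInt (x + y) f t := by
  set F := (Set.Ioo 0 t).indicator f
  have hF (r : ℝ) (hr : r ≤ 0) : F r = 0 := indicator_Ioo_of_nonpos hr t f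
  have hswap := integral_integral_swap
    (f := fun s r => rlKernel x (t - s) * (rlKernel y (s - r) * F r))
    (integrable_rlKernel_mul_rlKernel_mul hx hy hxy t (integrable_indicator_Ioo ht hf) hF)
  have hinner : ∫ s, ∫ r, rlKernel x (t - s) * (rlKernel y (s - r) * F r)
      = rlInt x (rlInt y f) t := by
    rw [rlInt_eq_integral ht le_rfl]
    refine integral_congr_ae (ae_of_all _ fun s => ?_)
    dsimp only
    rw [integral_const_mul]
    rcases lt_or_ge s t with hst | hst
    · congr 1
      rcases le_or_gt s 0 with hs | hs
      · rw [indicator_Ioo_of_nonpos hs]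
        refine integral_eq_zero_of_ae (ae_of_all _ fun r => ?_)
        rcases le_or_gt r 0 with hr | hr
        · simp [hF r hr]
        · simp [rlKernel_of_nonpos (by linarith : s - r ≤ 0)]
      · rw [Set.indicator_of_mem (Set.mem_Ioo.2 ⟨hs, hst⟩), rlInt_eq_integral hs.le hst.le]
    · rw [rlKernel_of_nonpos (sub_nonpos.2 hst), zero_mul, zero_mul]
  have houter (r : ℝ) : ∫ s, rlKernel x (t - s) * (rlKernel y (s - r) * F r)
      = rlKernel (x + y) (t - r) * F r := by
    rw [← integral_rlKernel_sub_mul_rlKernel_sub hx hy, ← integral_mul_const]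
    simp only [mul_assoc]
  rw [← hinner, hswap, rlInt_eq_integral ht le_rfl]
  simp only [houter, F]

lemma intervalIntegrable_rlKernel_sub_mul_rlInt {x y t : ℝ} (hx : 0 < x) (hy : 0 < y)
    (hxy : 1 ≤ x + y) (ht : 0 ≤ t) {f : ℝ → ℝ} (hf : IntervalIntegrable f volume 0 t) :
    IntervalIntegrable (fun s => rlKernel x (t - s) * rlInt y f s) volume 0 t := by
  have h := (integrable_rlKernel_mul_rlKernel_mul hx hy hxy t
    (integrable_indicator_Ioo ht hf) fun r hr => indicator_Ioo_of_nonpos hr t f).integral_prod_left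
  rw [intervalIntegrable_iff_integrableOn_Ioo_of_le ht]
  refine h.integrableOn.congr_fun (fun s hs => ?_) measurableSet_Ioo
  dsimp only
  rw [integral_const_mul, ← rlInt_eq_integral hs.1.le hs.2.le]

lemma intervalIntegrable_rlInt {σ t : ℝ} (hσ : 0 < σ) (ht : 0 ≤ t) {f : ℝ → ℝ}
    (hf : IntervalIntegrable f volume 0 t) : IntervalIntegrable (rlInt σ f) volume 0 t := by
  have h := intervalIntegrable_rlKernel_sub_mul_rlInt one_pos hσ (by linarith) ht hf
  rw [intervalIntegrable_iff_integrableOn_Ioo_of_le ht] at h ⊢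
  refine h.congr_fun (fun s hs => ?_) measurableSet_Ioo
  simp [rlKernel_of_pos (sub_pos.2 hs.2)]

lemma rlInt_add {σ t : ℝ} (ht : 0 ≤ t) {f g : ℝ → ℝ}
    (hf : IntervalIntegrable (fun s => rlKernel σ (t - s) * f s) volume 0 t)
    (hg : IntervalIntegrable (fun s => rlKernel σ (t - s) * g s) volume 0 t) :
    rlInt σ (fun s => f s + g s) t = rlInt σ f t + rlInt σ g t := by
  simp only [rlInt_eq_intervalIntegral ht, mul_add, intervalIntegral.integral_add hf hg]

lemma rlInt_const_mul (σ b : ℝ) (f : ℝ → ℝ) (t : ℝ) :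
    rlInt σ (fun s => b * f s) t = b * rlInt σ f t := by
  simp only [rlInt, mul_left_comm _ b, intervalIntegral.integral_const_mul]

/-- Rescaling to a fixed interval, from which continuity in `t` follows by dominated convergence. -/
lemma rlInt_eq_rpow_mul_integral {σ t : ℝ} (hσ : 0 < σ) (ht : 0 ≤ t) (f : ℝ → ℝ) :
    rlInt σ f t = t ^ σ / Real.Gamma σ * ∫ u in (0 : ℝ)..1, (1 - u) ^ (σ - 1) * f (t * u) := by
  rcases ht.eq_or_lt with rfl | ht
  · simp [rlInt, Real.zero_rpow hσ.ne']
  · have h := intervalIntegral.integral_comp_mul_left (a := 0) (b := 1)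
      (fun s => (t - s) ^ (σ - 1) * f s) ht.ne'
    rw [mul_zero, mul_one, smul_eq_mul, inv_mul_eq_div, eq_div_iff ht.ne'] at h
    have hscale : ∫ u in (0 : ℝ)..1, (t - t * u) ^ (σ - 1) * f (t * u)
        = t ^ (σ - 1) * ∫ u in (0 : ℝ)..1, (1 - u) ^ (σ - 1) * f (t * u) := by
      rw [← intervalIntegral.integral_const_mul]
      refine intervalIntegral.integral_congr fun u hu => ?_
      rw [Set.uIcc_of_le zero_le_one] at hu
      rw [← mul_one_sub, Real.mul_rpow ht.le (by linarith [hu.2]), mul_assoc]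
    rw [rlInt, ← h, hscale, Real.rpow_sub_one ht.ne']
    field_simp

lemma continuousOn_rlInt {σ : ℝ} (hσ : 0 < σ) {f : ℝ → ℝ} (hf : Continuous f) :
    ContinuousOn (rlInt σ f) (Set.Ici 0) := by
  have hJ : Continuous fun t : ℝ => ∫ u in (0 : ℝ)..1, (1 - u) ^ (σ - 1) * f (t * u) := by
    rw [continuous_iff_continuousAt]
    intro t₀
    obtain ⟨M, hM⟩ := (isCompact_Icc (a := -(|t₀| + 1))
      (b := |t₀| + 1)).exists_bound_of_continuousOn hf.continuousOn
    have hk : IntervalIntegrable (fun u : ℝ => (1 - u) ^ (σ - 1)) volume 0 1 := by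
      simpa using intervalIntegrable_sub_rpow_mul_rpow hσ one_pos one_pos
    refine intervalIntegral.continuousAt_of_dominated_interval
      (bound := fun u => (1 - u) ^ (σ - 1) * M) ?_ ?_ (hk.mul_const _) ?_
    · have := hf.measurable
      exact Eventually.of_forall fun t => Measurable.aestronglyMeasurable (by fun_prop)
    · filter_upwards [Metric.ball_mem_nhds t₀ one_pos] with t ht
      refine ae_of_all _ fun u hu => ?_
      rw [Set.uIoc_of_le zero_le_one] at hu
      have hu1 : 0 ≤ 1 - u := by linarith [hu.2]
      rw [norm_mul, Real.norm_of_nonneg (by positivity)]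
      gcongr
      refine hM _ (abs_le.1 ?_)
      rw [Metric.mem_ball, Real.dist_eq] at ht
      rw [abs_mul, abs_of_pos hu.1]
      nlinarith [hu.2, abs_nonneg t, abs_sub_abs_le_abs_sub t t₀]
    · exact ae_of_all _ fun u _ => by fun_prop
  refine ContinuousOn.congr ?_ fun t ht => rlInt_eq_rpow_mul_integral hσ ht f
  exact ((Real.continuous_rpow_const hσ.le).div_const _).continuousOn.mul hJ.continuousOn

/-! ### Mittag-Leffler kernels -/

lemma integrable_tsum_of_summable_integral_norm {X E ι : Type*} [MeasurableSpace X] {μ : Measure X}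
    [NormedAddCommGroup E] [CompleteSpace E] [Countable ι] {F : ι → X → E}
    (hF : ∀ i, Integrable (F i) μ) (hsum : Summable fun i => ∫ x, ‖F i x‖ ∂μ) :
    Integrable (fun x => ∑' i, F i x) μ := by
  have henorm (i : ι) : ∫⁻ x, ‖F i x‖ₑ ∂μ = ENNReal.ofReal (∫ x, ‖F i x‖ ∂μ) :=
    (ofReal_integral_norm_eq_lintegral_enorm (hF i)).symm
  have hfin : ∫⁻ x, ∑' i, ‖F i x‖ₑ ∂μ < ⊤ := by
    rw [lintegral_tsum fun i => (hF i).1.enorm]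
    simp only [henorm]
    exact hsum.tsum_ofReal_lt_top
  have hsummable : ∀ᵐ x ∂μ, Summable fun i => F i x := by
    filter_upwards [ae_lt_top' (AEMeasurable.tsum fun i => (hF i).1.enorm) hfin.ne]
      with x hx
    exact Summable.of_enorm hx.ne
  refine ⟨aestronglyMeasurable_of_tendsto_ae atTop (f := fun (s : Finset ι) x => ∑ i ∈ s, F i x)
    (fun s => Finset.aestronglyMeasurable_fun_sum s fun i _ => (hF i).1)
    (hsummable.mono fun x hx => hx.hasSum), ?_⟩
  exact (lintegral_mono fun x => enorm_tsum_le_tsum_enorm).trans_lt hfin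

/-- The Mittag-Leffler kernel `t ^ (σ - 1) E_{ρ,σ}(c t ^ ρ)`, extended by `0` to `t ≤ 0`. -/
noncomputable def mlKernel (c ρ σ t : ℝ) : ℝ :=
  ∑' j : ℕ, c ^ j * rlKernel (σ + ρ * j) t

lemma mlKernel_of_nonpos {c ρ σ t : ℝ} (ht : t ≤ 0) : mlKernel c ρ σ t = 0 := by
  simp [mlKernel, rlKernel_of_nonpos ht]

lemma exists_summable_pow_mul_rpow (c : ℝ) {ρ : ℝ} (hρ : 0 < ρ) :
    ∃ x > 0, ∀ σ : ℝ, Summable fun j : ℕ => |c| ^ j * x ^ (σ + ρ * j) := by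
  have hc : 0 < |c| + 1 := by positivity
  refine ⟨(1 / (2 * (|c| + 1))) ^ (1 / ρ), by positivity, fun σ => ?_⟩
  set x : ℝ := (1 / (2 * (|c| + 1))) ^ (1 / ρ)
  have hx : 0 < x := by positivity
  have hxρ : x ^ ρ = 1 / (2 * (|c| + 1)) := by
    rw [← Real.rpow_mul (by positivity), one_div_mul_cancel hρ.ne', Real.rpow_one]
  have hlt : |c| * x ^ ρ < 1 := by
    rw [hxρ, mul_one_div, div_lt_one (by positivity)]
    linarith [abs_nonneg c]
  refine ((summable_geometric_of_lt_one (by positivity) hlt).mul_left (x ^ σ)).congr fun j => ?_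
  rw [mul_pow, Real.rpow_add hx, Real.rpow_mul hx.le, Real.rpow_natCast]
  ring

lemma summable_abs_pow_mul_rlKernel (c : ℝ) {ρ σ : ℝ} (hρ : 0 < ρ) (hσ : 0 < σ) (t : ℝ) :
    Summable fun j : ℕ => |c| ^ j * rlKernel (σ + ρ * j) t := by
  rcases le_or_gt t 0 with ht | ht
  · simp [rlKernel_of_nonpos ht, summable_zero]
  obtain ⟨x, hx, hsum⟩ := exists_summable_pow_mul_rpow c hρ
  obtain ⟨B, hB, hΓ⟩ := exists_inv_Gamma_le_rpow (div_pos hx ht)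
  refine Summable.of_nonneg_of_le (fun j => ?_) (fun j => ?_) ((hsum σ).mul_left (B / t))
  · exact mul_nonneg (by positivity) (rlKernel_nonneg (by positivity) t)
  · rw [rlKernel_of_pos ht, Real.rpow_sub_one ht.ne']
    calc |c| ^ j * (t ^ (σ + ρ * j) / t / Real.Gamma (σ + ρ * j))
        = |c| ^ j * (t ^ (σ + ρ * j) / t) * (1 / Real.Gamma (σ + ρ * j)) := by ring
      _ ≤ |c| ^ j * (t ^ (σ + ρ * j) / t) * (B * (x / t) ^ (σ + ρ * j)) := by
        gcongr
        exact hΓ _ (by positivity)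
      _ = B / t * (|c| ^ j * x ^ (σ + ρ * j)) := by
        rw [Real.div_rpow hx.le ht.le]
        field_simp

lemma norm_pow_mul_rlKernel (c : ℝ) {σ : ℝ} (hσ : 0 ≤ σ) (j : ℕ) (t : ℝ) :
    ‖c ^ j * rlKernel σ t‖ = |c| ^ j * rlKernel σ t := by
  rw [norm_mul, norm_pow, Real.norm_eq_abs, Real.norm_of_nonneg (rlKernel_nonneg hσ t)]

lemma hasSum_mlKernel (c : ℝ) {ρ σ : ℝ} (hρ : 0 < ρ) (hσ : 0 < σ) (t : ℝ) :
    HasSum (fun j : ℕ => c ^ j * rlKernel (σ + ρ * j) t) (mlKernel c ρ σ t) := by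
  refine (Summable.of_norm ?_).hasSum
  exact (summable_abs_pow_mul_rlKernel c hρ hσ t).congr fun j =>
    (norm_pow_mul_rlKernel c (by positivity) j t).symm

lemma mlKernel_eq_rlKernel_add (c : ℝ) {ρ σ : ℝ} (hρ : 0 < ρ) (hσ : 0 < σ) (t : ℝ) :
    mlKernel c ρ σ t = rlKernel σ t + c * mlKernel c ρ (σ + ρ) t := by
  rw [mlKernel, (hasSum_mlKernel c hρ hσ t).summable.tsum_eq_zero_add, mlKernel, ← tsum_mul_left]
  congr 1
  · simp
  · refine tsum_congr fun j => ?_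
    push_cast
    rw [mul_add_one, add_comm (ρ * (j : ℝ)), ← add_assoc, pow_succ']
    ring

lemma rlInt_mlKernel (c : ℝ) {ρ σ θ t : ℝ} (hρ : 0 < ρ) (hσ : 0 < σ) (hθ : 0 < θ) (ht : 0 ≤ t) :
    rlInt θ (mlKernel c ρ σ) t = mlKernel c ρ (σ + θ) t := by
  set F : ℕ → ℝ → ℝ := fun j s => rlKernel θ (t - s) * (c ^ j * rlKernel (σ + ρ * j) s)
  have hF (j : ℕ) (s : ℝ) : F j s = c ^ j * (rlKernel θ (t - s) * rlKernel (σ + ρ * j) s) :=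
    mul_left_comm _ _ _
  have hpos (j : ℕ) : 0 < σ + ρ * j := by positivity
  have hidx (j : ℕ) : θ + (σ + ρ * j) = σ + θ + ρ * j := by ring
  have hint (j : ℕ) : Integrable (F j) := by
    simpa only [funext (hF j)] using
      (integrable_rlKernel_sub_mul_rlKernel hθ (hpos j) t).const_mul (c ^ j)
  have hnorm (j : ℕ) : ∫ s, ‖F j s‖ = |c| ^ j * rlKernel (σ + θ + ρ * j) t := by
    rw [← hidx, ← integral_rlKernel_sub_mul_rlKernel hθ (hpos j), ← integral_const_mul]
    refine integral_congr_ae (ae_of_all _ fun s => ?_)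
    dsimp only
    rw [hF, norm_mul, norm_pow, Real.norm_eq_abs, Real.norm_of_nonneg
      (mul_nonneg (rlKernel_nonneg hθ.le _) (rlKernel_nonneg (hpos j).le _))]
  have h := hasSum_integral_of_summable_integral_norm hint
    ((summable_abs_pow_mul_rlKernel c hρ (add_pos hσ hθ) t).congr fun j => (hnorm j).symm)
  rw [rlInt_eq_integral_of_forall_nonpos ht θ fun s hs => mlKernel_of_nonpos hs]
  have hval (j : ℕ) : ∫ s, F j s = c ^ j * rlKernel (σ + θ + ρ * j) t := by
    rw [integral_congr_ae (ae_of_all _ (hF j)), integral_const_mul,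
      integral_rlKernel_sub_mul_rlKernel hθ (hpos j), hidx]
  simp only [hval] at h
  simp only [F, tsum_mul_left] at h
  exact h.unique (hasSum_mlKernel c hρ (add_pos hσ hθ) t)

/-- Convolution with a Mittag-Leffler kernel; for `c = 0` this is `rlInt σ`. -/
noncomputable def mlConv (c ρ σ : ℝ) (f : ℝ → ℝ) (t : ℝ) : ℝ :=
  ∫ s in (0 : ℝ)..t, mlKernel c ρ σ (t - s) * f s

section MlConv

variable {c ρ σ t : ℝ} {f g : ℝ → ℝ}

lemma integrableOn_pow_mul_rlKernel_mul (c : ℝ) {σ : ℝ} (hσ : 1 ≤ σ)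
    (hf : IntegrableOn f (Set.Ioc 0 t)) (j : ℕ) :
    IntegrableOn (fun s => c ^ j * rlKernel σ (t - s) * f s) (Set.Ioc 0 t) ∧
      ∫ s in Set.Ioc 0 t, ‖c ^ j * rlKernel σ (t - s) * f s‖
        ≤ |c| ^ j * rlKernel σ t * ∫ s in Set.Ioc 0 t, ‖f s‖ := by
  have hbound : ∀ s ∈ Set.Ioc 0 t, ‖c ^ j * rlKernel σ (t - s)‖ ≤ |c| ^ j * rlKernel σ t := by
    intro s hs
    rw [norm_pow_mul_rlKernel c (by linarith)]
    gcongr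
    exact rlKernel_le_rlKernel hσ (by linarith [hs.1])
  have hmeas := measurable_rlKernel σ
  have hint : IntegrableOn (fun s => c ^ j * rlKernel σ (t - s) * f s) (Set.Ioc 0 t) :=
    Integrable.bdd_mul hf (Measurable.aestronglyMeasurable (by fun_prop))
      ((ae_restrict_iff' measurableSet_Ioc).2 (ae_of_all _ hbound))
  refine ⟨hint, ?_⟩
  rw [← integral_const_mul]
  refine setIntegral_mono_on hint.norm (hf.norm.const_mul _) measurableSet_Ioc fun s hs => ?_
  rw [norm_mul]
  gcongr
  exact hbound s hs

lemma summable_integral_norm_pow_mul_rlKernel_mul (c : ℝ) (hρ : 0 < ρ) (hσ : 1 ≤ σ)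
    (hf : IntegrableOn f (Set.Ioc 0 t)) :
    Summable fun j : ℕ => ∫ s in Set.Ioc 0 t, ‖c ^ j * rlKernel (σ + ρ * j) (t - s) * f s‖ := by
  refine Summable.of_nonneg_of_le (fun j => integral_nonneg fun s => norm_nonneg _) (fun j => ?_)
    ((summable_abs_pow_mul_rlKernel c hρ (by linarith : 0 < σ) t).mul_right
      (∫ s in Set.Ioc 0 t, ‖f s‖))
  exact (integrableOn_pow_mul_rlKernel_mul c (le_add_of_le_of_nonneg hσ (by positivity)) hf j).2

lemma intervalIntegrable_mlKernel_mul (c : ℝ) (hρ : 0 < ρ) (hσ : 1 ≤ σ) (ht : 0 ≤ t)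
    (hf : IntervalIntegrable f volume 0 t) :
    IntervalIntegrable (fun s => mlKernel c ρ σ (t - s) * f s) volume 0 t := by
  rw [intervalIntegrable_iff_integrableOn_Ioc_of_le ht] at hf ⊢
  have h := integrable_tsum_of_summable_integral_norm
    (fun j : ℕ => (integrableOn_pow_mul_rlKernel_mul c
      (le_add_of_le_of_nonneg hσ (by positivity : 0 ≤ ρ * j)) hf j).1)
    (summable_integral_norm_pow_mul_rlKernel_mul c hρ hσ hf)
  simpa only [IntegrableOn, mlKernel, tsum_mul_right] using h

lemma hasSum_mlConv (c : ℝ) (hρ : 0 < ρ) (hσ : 1 ≤ σ) (ht : 0 ≤ t)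
    (hf : IntervalIntegrable f volume 0 t) :
    HasSum (fun j : ℕ => c ^ j * rlInt (σ + ρ * j) f t) (mlConv c ρ σ f t) := by
  rw [intervalIntegrable_iff_integrableOn_Ioc_of_le ht] at hf
  have h := hasSum_integral_of_summable_integral_norm
    (fun j : ℕ => (integrableOn_pow_mul_rlKernel_mul c
      (le_add_of_le_of_nonneg hσ (by positivity : 0 ≤ ρ * j)) hf j).1)
    (summable_integral_norm_pow_mul_rlKernel_mul c hρ hσ hf)
  have hval (j : ℕ) : ∫ s in Set.Ioc 0 t, c ^ j * rlKernel (σ + ρ * j) (t - s) * f s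
      = c ^ j * rlInt (σ + ρ * j) f t := by
    rw [rlInt_eq_intervalIntegral ht, intervalIntegral.integral_of_le ht, ← integral_const_mul]
    simp only [mul_assoc]
  simp only [hval, tsum_mul_right, ← intervalIntegral.integral_of_le ht] at h
  exact h

lemma mlConv_eq_rlInt_add (c : ℝ) (hρ : 0 < ρ) (hσ : 1 ≤ σ) (ht : 0 ≤ t)
    (hf : IntervalIntegrable f volume 0 t) :
    mlConv c ρ σ f t = rlInt σ f t + c * mlConv c ρ (σ + ρ) f t := by
  rw [← (hasSum_mlConv c hρ hσ ht hf).tsum_eq,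
    (hasSum_mlConv c hρ hσ ht hf).summable.tsum_eq_zero_add,
    ← (hasSum_mlConv c hρ (by linarith) ht hf).tsum_eq, ← tsum_mul_left]
  congr 1
  · simp
  · refine tsum_congr fun j => ?_
    push_cast
    rw [mul_add_one, add_comm (ρ * (j : ℝ)), ← add_assoc, pow_succ']
    ring

lemma mlConv_rlInt (c : ℝ) {θ : ℝ} (hρ : 0 < ρ) (hσ : 1 ≤ σ) (hθ : 0 < θ) (ht : 0 ≤ t)
    (hf : IntervalIntegrable f volume 0 t) :
    mlConv c ρ σ (rlInt θ f) t = mlConv c ρ (σ + θ) f t := by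
  rw [← (hasSum_mlConv c hρ hσ ht (intervalIntegrable_rlInt hθ ht hf)).tsum_eq,
    ← (hasSum_mlConv c hρ (by linarith : 1 ≤ σ + θ) ht hf).tsum_eq]
  refine tsum_congr fun j => ?_
  have : 0 ≤ ρ * j := by positivity
  rw [rlInt_rlInt (by linarith) hθ (by linarith) ht hf, add_right_comm]

lemma mlConv_rlKernel (c : ℝ) {θ : ℝ} (hρ : 0 < ρ) (hσ : 0 < σ) (hθ : 0 < θ) (ht : 0 ≤ t) :
    mlConv c ρ σ (rlKernel θ) t = mlKernel c ρ (σ + θ) t := by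
  rw [mlConv, ← rlInt_mlKernel c hρ hσ hθ ht, rlInt_eq_intervalIntegral ht]
  simpa [mul_comm] using intervalIntegral.integral_comp_sub_left (a := 0) (b := t)
    (fun s => rlKernel θ (t - s) * mlKernel c ρ σ s) t

lemma mlConv_congr (ht : 0 ≤ t) (h : ∀ s ∈ Set.Ioo 0 t, f s = g s) :
    mlConv c ρ σ f t = mlConv c ρ σ g t := by
  simp only [mlConv, intervalIntegral.integral_of_le ht, integral_Ioc_eq_integral_Ioo]
  exact setIntegral_congr_fun measurableSet_Ioo fun s hs => by simp only [h s hs]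

lemma mlConv_add (hρ : 0 < ρ) (hσ : 1 ≤ σ) (ht : 0 ≤ t) (hf : IntervalIntegrable f volume 0 t)
    (hg : IntervalIntegrable g volume 0 t) :
    mlConv c ρ σ (fun s => f s + g s) t = mlConv c ρ σ f t + mlConv c ρ σ g t := by
  simp only [mlConv, mul_add]
  exact intervalIntegral.integral_add (intervalIntegrable_mlKernel_mul c hρ hσ ht hf)
    (intervalIntegrable_mlKernel_mul c hρ hσ ht hg)

lemma mlConv_const_mul (b : ℝ) :
    mlConv c ρ σ (fun s => b * f s) t = b * mlConv c ρ σ f t := by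
  simp only [mlConv, mul_left_comm _ b, intervalIntegral.integral_const_mul]

end MlConv

/-! ### Subordination -/

/-- The coefficient of `z ^ m` in `exp (-τ (1 - z) ^ μ)`; differentiating in `z` gives the
recursion. After the rescaling of `subordinatorDensity` it approximates the density of the inverse
`μ`-stable subordinator. -/
noncomputable def subordinatorCoeff (μ : ℝ) : ℕ → ℝ → ℝ
  | 0, τ => Real.exp (-τ)
  | m + 1, τ => μ * τ / (m + 1) *
      ∑ i : Fin (m + 1), Ring.multichoose (1 - μ) (m - i) * subordinatorCoeff μ i τ

lemma subordinatorCoeff_zero (μ τ : ℝ) : subordinatorCoeff μ 0 τ = Real.exp (-τ) := by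
  rw [subordinatorCoeff]

lemma subordinatorCoeff_succ (μ : ℝ) (m : ℕ) (τ : ℝ) :
    subordinatorCoeff μ (m + 1) τ = μ * τ / (m + 1) * ∑ ij ∈ Finset.HasAntidiagonal.antidiagonal m,
      Ring.multichoose (1 - μ) ij.1 * subordinatorCoeff μ ij.2 τ := by
  rw [subordinatorCoeff, ← Finset.Nat.sum_antidiagonal_swap,
    Finset.Nat.sum_antidiagonal_eq_sum_range_succ_mk, Finset.sum_range]
  rfl

lemma subordinatorCoeff_nonneg {μ τ : ℝ} (hμ0 : 0 ≤ μ) (hμ1 : μ ≤ 1) (hτ : 0 ≤ τ) (m : ℕ) :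
    0 ≤ subordinatorCoeff μ m τ := by
  induction m using Nat.strong_induction_on with
  | _ m ih =>
    rcases m with _ | m
    · rw [subordinatorCoeff_zero]
      positivity
    · rw [subordinatorCoeff_succ]
      refine mul_nonneg (by positivity) (Finset.sum_nonneg fun ij hij => ?_)
      exact mul_nonneg (multichoose_nonneg (by linarith) _)
        (ih _ (Finset.Nat.antidiagonal.snd_lt hij))

lemma subordinatorCoeff_succ_mul_rpow (μ κ : ℝ) (m : ℕ) {τ : ℝ} (hτ : 0 < τ) :
    subordinatorCoeff μ (m + 1) τ * τ ^ (κ - 1)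
      = ∑ ij ∈ Finset.HasAntidiagonal.antidiagonal m, μ / (m + 1) * Ring.multichoose (1 - μ) ij.1 *
          (subordinatorCoeff μ ij.2 τ * τ ^ (κ + 1 - 1)) := by
  rw [subordinatorCoeff_succ, add_sub_right_comm, Real.rpow_add_one hτ.ne', Finset.mul_sum,
    Finset.sum_mul]
  exact Finset.sum_congr rfl fun ij _ => by ring

lemma sum_multichoose_mul_Gamma (μ : ℝ) {κ : ℝ} (hκ : 0 < κ) (m : ℕ) :
    ∑ ij ∈ Finset.HasAntidiagonal.antidiagonal m, μ / (m + 1) * Ring.multichoose (1 - μ) ij.1 *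
        (Real.Gamma (κ + 1) * Ring.multichoose (μ * (κ + 1)) ij.2)
      = Real.Gamma κ * Ring.multichoose (μ * κ) (m + 1) := by
  have hsum : ∑ ij ∈ Finset.HasAntidiagonal.antidiagonal m,
      Ring.multichoose (1 - μ) ij.1 * Ring.multichoose (μ * (κ + 1)) ij.2
        = Ring.multichoose (μ * κ + 1) m := by
    rw [← multichoose_add]
    ring_nf
  calc _ = μ / (m + 1) * Real.Gamma (κ + 1) * ∑ ij ∈ Finset.HasAntidiagonal.antidiagonal m,
        Ring.multichoose (1 - μ) ij.1 * Ring.multichoose (μ * (κ + 1)) ij.2 := by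
        rw [Finset.mul_sum]
        exact Finset.sum_congr rfl fun ij _ => by ring
    _ = Real.Gamma κ * ((μ * κ * Ring.multichoose (μ * κ + 1) m) / (m + 1)) := by
        rw [hsum, Real.Gamma_add_one hκ.ne']
        ring
    _ = _ := by
        rw [← succ_mul_multichoose_succ_eq_mul_add_one, mul_div_cancel_left₀ _ (by positivity)]

lemma integral_subordinatorCoeff_mul_rpow (μ : ℝ) (m : ℕ) {κ : ℝ} (hκ : 0 < κ) :
    IntegrableOn (fun τ => subordinatorCoeff μ m τ * τ ^ (κ - 1)) (Set.Ioi 0) ∧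
      ∫ τ in Set.Ioi (0 : ℝ), subordinatorCoeff μ m τ * τ ^ (κ - 1)
        = Real.Gamma κ * Ring.multichoose (μ * κ) m := by
  induction m using Nat.strong_induction_on generalizing κ with
  | _ m ih =>
    rcases m with _ | m
    · simp only [subordinatorCoeff_zero, Ring.multichoose_zero_right, mul_one]
      exact ⟨Real.GammaIntegral_convergent hκ, (Real.Gamma_eq_integral hκ).symm⟩
    · have heq : Set.EqOn (fun τ => subordinatorCoeff μ (m + 1) τ * τ ^ (κ - 1)) _ (Set.Ioi 0) :=
        fun τ hτ => subordinatorCoeff_succ_mul_rpow μ κ m hτ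
      have hκ' : 0 < κ + 1 := by positivity
      have hint (ij) (hij : ij ∈ Finset.HasAntidiagonal.antidiagonal m) : IntegrableOn (fun τ =>
          μ / (m + 1) * Ring.multichoose (1 - μ) ij.1 *
            (subordinatorCoeff μ ij.2 τ * τ ^ (κ + 1 - 1))) (Set.Ioi 0) :=
        (ih ij.2 (Finset.Nat.antidiagonal.snd_lt hij) hκ').1.const_mul _
      refine ⟨IntegrableOn.congr_fun (integrable_finsetSum _ hint) heq.symm measurableSet_Ioi, ?_⟩
      rw [setIntegral_congr_fun measurableSet_Ioi heq, integral_finsetSum _ hint,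
        ← sum_multichoose_mul_Gamma μ hκ]
      refine Finset.sum_congr rfl fun ij hij => ?_
      rw [integral_const_mul, (ih ij.2 (Finset.Nat.antidiagonal.snd_lt hij) hκ').2]

/-- Approximate density in `τ` of the inverse `μ`-stable subordinator at time `t`; letting `m → ∞`,
integration against it turns `rlKernel κ` into `rlKernel (μ * κ) t`. -/
noncomputable def subordinatorDensity (μ t : ℝ) (m : ℕ) (τ : ℝ) : ℝ :=
  m / t * subordinatorCoeff μ m (τ * (m / t) ^ μ)

lemma subordinatorDensity_nonneg {μ t τ : ℝ} (hμ0 : 0 ≤ μ) (hμ1 : μ ≤ 1) (ht : 0 ≤ t) (m : ℕ)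
    (hτ : 0 ≤ τ) : 0 ≤ subordinatorDensity μ t m τ :=
  mul_nonneg (by positivity) (subordinatorCoeff_nonneg hμ0 hμ1 (by positivity) m)

lemma subordinatorDensity_mul_rlKernel (μ : ℝ) {t κ τ : ℝ} (ht : 0 < t) {m : ℕ} (hm : m ≠ 0)
    (hτ : 0 < τ) :
    subordinatorDensity μ t m τ * rlKernel κ τ
      = (m / t) * (m / t) ^ (μ * (1 - κ)) / Real.Gamma κ *
        (subordinatorCoeff μ m (τ * (m / t) ^ μ) * (τ * (m / t) ^ μ) ^ (κ - 1)) := by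
  have : (0 : ℝ) < m := by positivity
  have hscale : τ ^ (κ - 1) = (m / t) ^ (μ * (1 - κ)) * (τ * (m / t) ^ μ) ^ (κ - 1) := by
    rw [Real.mul_rpow hτ.le (by positivity), ← Real.rpow_mul (by positivity), mul_left_comm,
      ← Real.rpow_add (by positivity)]
    ring_nf
    simp
  rw [subordinatorDensity, rlKernel_of_pos hτ, hscale]
  ring

lemma integral_subordinatorDensity_mul_rlKernel (μ : ℝ) {t κ : ℝ} (ht : 0 < t) (hκ : 0 < κ)
    {m : ℕ} (hm : m ≠ 0) :
    IntegrableOn (fun τ => subordinatorDensity μ t m τ * rlKernel κ τ) (Set.Ioi 0) ∧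
      ∫ τ in Set.Ioi (0 : ℝ), subordinatorDensity μ t m τ * rlKernel κ τ
        = t ^ (μ * κ - 1) * invGammaSeq (μ * κ) m := by
  have : (0 : ℝ) < m := by positivity
  have hb : 0 < (m / t : ℝ) ^ μ := by positivity
  obtain ⟨hint, hval⟩ := integral_subordinatorCoeff_mul_rpow μ m hκ
  have heq : Set.EqOn (fun τ => subordinatorDensity μ t m τ * rlKernel κ τ) _ (Set.Ioi 0) :=
    fun τ hτ => subordinatorDensity_mul_rlKernel μ ht hm hτ
  constructor
  · refine IntegrableOn.congr_fun (Integrable.const_mul ?_ _) heq.symm measurableSet_Ioi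
    rw [← zero_mul ((m / t : ℝ) ^ μ)] at hint
    exact (integrableOn_Ioi_comp_mul_right_iff _ 0 hb).2 hint
  · rw [setIntegral_congr_fun measurableSet_Ioi heq, integral_const_mul,
      integral_comp_mul_right_Ioi (fun u => subordinatorCoeff μ m u * u ^ (κ - 1)) 0 hb, zero_mul,
      hval, smul_eq_mul, invGammaSeq]
    have hpow : (m / t : ℝ) * (m / t : ℝ) ^ (μ * (1 - κ)) * ((m / t : ℝ) ^ μ)⁻¹
        = t ^ (μ * κ - 1) * (m : ℝ) ^ (1 - μ * κ) := by
      rw [← Real.rpow_neg (by positivity), mul_assoc, ← Real.rpow_add (by positivity), mul_comm,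
        ← Real.rpow_add_one (by positivity), Real.div_rpow (by positivity) ht.le, div_eq_mul_inv,
        ← Real.rpow_neg ht.le]
      ring_nf
    have := (Real.Gamma_pos_of_pos hκ).ne'
    rw [← mul_assoc (t ^ (μ * κ - 1)), ← hpow]
    field_simp

lemma exists_summable_forall_invGammaSeq_le (c : ℝ) {ρ σ t : ℝ} (hρ : 0 < ρ) (hσ : 0 < σ)
    (ht : 0 < t) :
    ∃ B : ℕ → ℝ, Summable B ∧ ∀ᶠ m in atTop, ∀ j : ℕ,
      |c| ^ j * (t ^ (σ + ρ * j - 1) * invGammaSeq (σ + ρ * j) m) ≤ B j := by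
  obtain ⟨x, hx, hsum⟩ := exists_summable_pow_mul_rpow c hρ
  obtain ⟨C, hC, hle⟩ := exists_forall_invGammaSeq_le (div_pos hx ht)
  refine ⟨fun j => C / t * (|c| ^ j * x ^ (σ + ρ * j)), (hsum σ).mul_left _, ?_⟩
  filter_upwards [hle] with m hm j
  calc _ ≤ |c| ^ j * (t ^ (σ + ρ * j - 1) * (C * (x / t) ^ (σ + ρ * j))) := by
        gcongr
        exact hm _ (by positivity)
    _ = _ := by
        rw [Real.div_rpow hx.le ht.le, Real.rpow_sub_one ht.ne']
        field_simp

lemma tendsto_integral_subordinatorDensity_mul_rlKernel {μ t κ : ℝ} (hμ : 0 < μ) (ht : 0 < t)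
    (hκ : 0 < κ) :
    Tendsto (fun m => ∫ τ in Set.Ioi (0 : ℝ), subordinatorDensity μ t m τ * rlKernel κ τ) atTop
      (nhds (rlKernel (μ * κ) t)) := by
  rw [rlKernel_of_pos ht, div_eq_mul_one_div]
  refine ((tendsto_invGammaSeq (mul_pos hμ hκ)).const_mul _).congr' ?_
  filter_upwards [eventually_ne_atTop 0] with m hm
  rw [(integral_subordinatorDensity_mul_rlKernel μ ht hκ hm).2]

lemma eventually_hasSum_integral_subordinatorDensity_mul (c : ℝ) {μ ρ t κ : ℝ} (hμ0 : 0 < μ)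
    (hμ1 : μ ≤ 1) (hρ : 0 < ρ) (ht : 0 < t) (hκ : 0 < κ) :
    ∀ᶠ m in atTop,
      IntegrableOn (fun τ => subordinatorDensity μ t m τ * mlKernel c ρ κ τ) (Set.Ioi 0) ∧
      HasSum (fun j : ℕ => c ^ j *
          (t ^ (μ * κ + μ * ρ * j - 1) * invGammaSeq (μ * κ + μ * ρ * j) m))
        (∫ τ in Set.Ioi (0 : ℝ), subordinatorDensity μ t m τ * mlKernel c ρ κ τ) := by
  obtain ⟨B, hB, hle⟩ :=
    exists_summable_forall_invGammaSeq_le c (mul_pos hμ0 hρ) (mul_pos hμ0 hκ) ht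
  filter_upwards [hle, eventually_ne_atTop 0] with m hm hm0
  set F : ℕ → ℝ → ℝ := fun j τ => subordinatorDensity μ t m τ * (c ^ j * rlKernel (κ + ρ * j) τ)
  have hidx (j : ℕ) : μ * (κ + ρ * j) = μ * κ + μ * ρ * j := by ring
  have hmom (j : ℕ) := integral_subordinatorDensity_mul_rlKernel μ (κ := κ + ρ * j) ht
    (by positivity) hm0
  have hF (j : ℕ) : IntegrableOn (F j) (Set.Ioi 0) := by
    simpa only [IntegrableOn, F, mul_left_comm _ (c ^ j)] using (hmom j).1.const_mul (c ^ j)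
  have hval (j : ℕ) : ∫ τ in Set.Ioi (0 : ℝ), F j τ
      = c ^ j * (t ^ (μ * κ + μ * ρ * j - 1) * invGammaSeq (μ * κ + μ * ρ * j) m) := by
    simp only [F, mul_left_comm _ (c ^ j), integral_const_mul, (hmom j).2, hidx]
  have hnorm (j : ℕ) : ∫ τ in Set.Ioi (0 : ℝ), ‖F j τ‖
      = |c| ^ j * (t ^ (μ * κ + μ * ρ * j - 1) * invGammaSeq (μ * κ + μ * ρ * j) m) := by
    rw [← hidx, ← (hmom j).2, ← integral_const_mul]
    refine setIntegral_congr_fun measurableSet_Ioi fun τ hτ => ?_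
    simp only [F]
    rw [norm_mul, norm_pow_mul_rlKernel c (by positivity), mul_left_comm,
      Real.norm_of_nonneg (subordinatorDensity_nonneg hμ0.le hμ1 ht.le m (le_of_lt hτ))]
  have hsum : Summable fun j => ∫ τ in Set.Ioi (0 : ℝ), ‖F j τ‖ :=
    Summable.of_nonneg_of_le (fun j => integral_nonneg fun τ => norm_nonneg _)
      (fun j => (hnorm j).trans_le (hm j)) hB
  have hint := integrable_tsum_of_summable_integral_norm hF hsum
  have hhas := hasSum_integral_of_summable_integral_norm hF hsum
  simp only [hval] at hhas
  simp only [F, tsum_mul_left] at hint hhas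
  exact ⟨hint, hhas⟩

lemma tendsto_integral_subordinatorDensity_mul_mlKernel (c : ℝ) {μ ρ t κ : ℝ} (hμ0 : 0 < μ)
    (hμ1 : μ ≤ 1) (hρ : 0 < ρ) (ht : 0 < t) (hκ : 0 < κ) :
    Tendsto (fun m => ∫ τ in Set.Ioi (0 : ℝ), subordinatorDensity μ t m τ * mlKernel c ρ κ τ) atTop
      (nhds (mlKernel c (μ * ρ) (μ * κ) t)) := by
  have hpos (j : ℕ) : 0 < μ * κ + μ * ρ * j := by positivity
  obtain ⟨B, hB, hle⟩ :=
    exists_summable_forall_invGammaSeq_le c (mul_pos hμ0 hρ) (mul_pos hμ0 hκ) ht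
  have hlim := tendsto_tsum_of_dominated_convergence (𝓕 := atTop)
    (f := fun m (j : ℕ) => c ^ j *
      (t ^ (μ * κ + μ * ρ * j - 1) * invGammaSeq (μ * κ + μ * ρ * j) m))
    (g := fun j : ℕ => c ^ j * rlKernel (μ * κ + μ * ρ * j) t) hB
    (fun j => by
      rw [rlKernel_of_pos ht, div_eq_mul_one_div]
      exact ((tendsto_invGammaSeq (hpos j)).const_mul _).const_mul _)
    (hle.mono fun m hm j => by
      rw [norm_mul, norm_pow, Real.norm_eq_abs, Real.norm_of_nonneg
        (mul_nonneg (by positivity) (invGammaSeq_nonneg (hpos j).le m))]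
      exact hm j)
  refine hlim.congr' ?_
  filter_upwards [eventually_hasSum_integral_subordinatorDensity_mul c hμ0 hμ1 hρ ht hκ] with m hm
  exact hm.2.tsum_eq

lemma nonneg_rlKernel_add_mlKernel_of_subordination {c μ ρ κ η C e t : ℝ} (hμ0 : 0 < μ)
    (hμ1 : μ ≤ 1) (hρ : 0 < ρ) (hκ : 0 < κ) (hη : 0 < η) (ht : 0 < t)
    (h : ∀ τ > 0, 0 ≤ C * rlKernel η τ + e * mlKernel c ρ κ τ) :
    0 ≤ C * rlKernel (μ * η) t + e * mlKernel c (μ * ρ) (μ * κ) t := by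
  refine ge_of_tendsto
    (((tendsto_integral_subordinatorDensity_mul_rlKernel hμ0 ht hη).const_mul C).add
    ((tendsto_integral_subordinatorDensity_mul_mlKernel c hμ0 hμ1 hρ ht hκ).const_mul e)) ?_
  filter_upwards [eventually_hasSum_integral_subordinatorDensity_mul c hμ0 hμ1 hρ ht hκ,
    eventually_ne_atTop 0] with m hm hm0
  have hrl := (integral_subordinatorDensity_mul_rlKernel μ ht hη hm0).1
  rw [← integral_const_mul, ← integral_const_mul,
    ← integral_add (hrl.const_mul C) (hm.1.const_mul e)]
  refine setIntegral_nonneg measurableSet_Ioi fun τ hτ => ?_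
  calc 0 ≤ subordinatorDensity μ t m τ * (C * rlKernel η τ + e * mlKernel c ρ κ τ) :=
        mul_nonneg (subordinatorDensity_nonneg hμ0.le hμ1 ht.le m (le_of_lt hτ)) (h τ hτ)
    _ = _ := by ring

/-! ### Positivity and growth of the kernels -/

lemma rlInt_nonneg {σ t : ℝ} (hσ : 0 ≤ σ) (ht : 0 ≤ t) {f : ℝ → ℝ}
    (hf : ∀ s ∈ Set.Icc 0 t, 0 ≤ f s) : 0 ≤ rlInt σ f t := by
  rw [rlInt_eq_intervalIntegral ht]
  exact intervalIntegral.integral_nonneg ht fun s hs => mul_nonneg (rlKernel_nonneg hσ _) (hf s hs)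

lemma abs_rlInt_le {θ M t : ℝ} (hθ : 0 < θ) (ht : 0 ≤ t) {f : ℝ → ℝ}
    (hf : ∀ s ∈ Set.Ioc 0 t, |f s| ≤ M) : |rlInt θ f t| ≤ M * rlKernel (θ + 1) t := by
  rw [← rlInt_rlKernel hθ one_pos ht, rlInt_eq_intervalIntegral ht, rlInt_eq_intervalIntegral ht,
    ← intervalIntegral.integral_const_mul, ← Real.norm_eq_abs]
  refine intervalIntegral.norm_integral_le_of_norm_le ht (ae_of_all _ fun s hs => ?_)
    ((integrable_rlKernel_sub_mul_rlKernel hθ one_pos t).intervalIntegrable.const_mul M)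
  have hone : rlKernel 1 s = 1 := by simp [rlKernel_of_pos hs.1]
  rw [norm_mul, Real.norm_of_nonneg (rlKernel_nonneg hθ.le _), hone, mul_one, mul_comm]
  exact mul_le_mul_of_nonneg_right (hf s hs) (rlKernel_nonneg hθ.le _)

lemma abs_integral_mul_rpow_le {θ M x : ℝ} (hθ : 0 < θ) (hx : 0 ≤ x) {f : ℝ → ℝ}
    (hf : ∀ s ∈ Set.Ioc 0 x, |f s| ≤ M) :
    |∫ s in (0 : ℝ)..x, f s * s ^ (θ - 1)| ≤ M * (x ^ θ / θ) := by
  have hint : ∫ s in (0 : ℝ)..x, s ^ (θ - 1) = x ^ θ / θ := by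
    rw [integral_rpow (Or.inl (by linarith)), sub_add_cancel, Real.zero_rpow hθ.ne', sub_zero]
  rw [← hint, ← intervalIntegral.integral_const_mul, ← Real.norm_eq_abs]
  refine intervalIntegral.norm_integral_le_of_norm_le hx (ae_of_all _ fun s hs => ?_)
    ((intervalIntegral.intervalIntegrable_rpow' (by linarith : -1 < θ - 1)).const_mul M)
  have hs0 := hs.1
  rw [norm_mul, Real.norm_of_nonneg (by positivity : 0 ≤ s ^ (θ - 1))]
  exact mul_le_mul_of_nonneg_right (hf s hs) (by positivity)

lemma abs_integral_mul_rpow_le_of_hasDerivAt {r N x y : ℝ} (hr : r ≤ 0) (hx : 0 < x) (hxy : x ≤ y)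
    {F f : ℝ → ℝ} (hF : ∀ s, HasDerivAt F (f s) s) (hf : Continuous f) (hN : ∀ s, |F s| ≤ N) :
    |∫ s in x..y, f s * s ^ r| ≤ 2 * N * x ^ r := by
  have hderiv : ∀ s ∈ Set.uIcc x y, HasDerivAt (fun s : ℝ => s ^ r) (r * s ^ (r - 1)) s := by
    intro s hs
    rw [Set.uIcc_of_le hxy] at hs
    exact Real.hasDerivAt_rpow_const (Or.inl (hx.trans_le hs.1).ne')
  have hint : IntervalIntegrable (fun s : ℝ => r * s ^ (r - 1)) volume x y := by
    refine (intervalIntegral.intervalIntegrable_rpow (Or.inr ?_)).const_mul _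
    rw [Set.uIcc_of_le hxy]
    exact fun h0 => hx.not_ge h0.1
  have hrem : |∫ s in x..y, r * s ^ (r - 1) * F s| ≤ N * (x ^ r - y ^ r) := by
    rw [← neg_sub (y ^ r), mul_neg, ← neg_mul,
      ← intervalIntegral.integral_eq_sub_of_hasDerivAt hderiv hint,
      ← intervalIntegral.integral_const_mul, ← Real.norm_eq_abs]
    refine intervalIntegral.norm_integral_le_of_norm_le hxy (ae_of_all _ fun s hs => ?_)
      (hint.const_mul (-N))
    have hs0 : 0 < s := hx.trans hs.1
    have hnonpos : r * s ^ (r - 1) ≤ 0 := mul_nonpos_of_nonpos_of_nonneg hr (by positivity)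
    rw [norm_mul, Real.norm_of_nonpos hnonpos, neg_mul_comm, mul_comm (-N)]
    exact mul_le_mul_of_nonpos_left (neg_le_neg (hN s)) hnonpos
  have hboundary (z : ℝ) (hz : 0 < z) : |z ^ r * F z| ≤ N * z ^ r := by
    rw [abs_mul, abs_of_pos (by positivity : 0 < z ^ r), mul_comm N]
    exact mul_le_mul_of_nonneg_left (hN z) (by positivity)
  simp only [mul_comm (f _)]
  rw [intervalIntegral.integral_mul_deriv_eq_deriv_mul hderiv (fun s _ => hF s) hint
    (hf.intervalIntegrable x y)]
  have hX := abs_le.1 (hboundary x hx)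
  have hY := abs_le.1 (hboundary y (hx.trans_le hxy))
  have hR := abs_le.1 hrem
  rw [abs_le]
  constructor <;> linarith

lemma rlInt_eq_integral_comp_sub (θ : ℝ) (f : ℝ → ℝ) (t : ℝ) :
    rlInt θ f t = 1 / Real.Gamma θ * ∫ s in (0 : ℝ)..t, f (t - s) * s ^ (θ - 1) := by
  rw [rlInt]
  congr 1
  simpa [mul_comm] using intervalIntegral.integral_comp_sub_left (a := 0) (b := t)
    (fun s => f (t - s) * s ^ (θ - 1)) t

/-- Near the singularity of the kernel the bound on `f` is used, away from it the kernel is monotone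
and integration by parts brings in the bound on the primitive. -/
lemma abs_rlInt_le_of_hasDerivAt {θ M N t : ℝ} (hθ0 : 0 < θ) (hθ1 : θ ≤ 1) (ht : 0 ≤ t)
    {F f : ℝ → ℝ} (hF : ∀ s, HasDerivAt F (f s) s) (hf : Continuous f) (hM : ∀ s, |f s| ≤ M)
    (hN : ∀ s, |F s| ≤ N) :
    |rlInt θ f t| ≤ (M / θ + 2 * N) / Real.Gamma θ := by
  have := Real.Gamma_pos_of_pos hθ0
  have hM0 : 0 ≤ M := (abs_nonneg _).trans (hM 0)
  have hN0 : 0 ≤ N := (abs_nonneg _).trans (hN 0)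
  have hnear (x : ℝ) (hx0 : 0 ≤ x) (hx1 : x ≤ 1) :
      |∫ s in (0 : ℝ)..x, f (t - s) * s ^ (θ - 1)| ≤ M / θ := by
    rw [← mul_one_div]
    refine (abs_integral_mul_rpow_le hθ0 hx0 fun s _ => hM (t - s)).trans ?_
    gcongr
    exact Real.rpow_le_one hx0 hx1 hθ0.le
  rw [rlInt_eq_integral_comp_sub, abs_mul, abs_of_pos (by positivity), one_div_mul_eq_div]
  gcongr
  rcases le_total t 1 with ht1 | ht1
  · linarith [hnear t ht ht1]
  have hint (x y : ℝ) : IntervalIntegrable (fun s : ℝ => f (t - s) * s ^ (θ - 1)) volume x y :=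
    (intervalIntegral.intervalIntegrable_rpow' (by linarith)).continuousOn_mul (by fun_prop)
  have hfar : |∫ s in (1 : ℝ)..t, f (t - s) * s ^ (θ - 1)| ≤ 2 * N := by
    have hF' (s : ℝ) : HasDerivAt (fun s => -F (t - s)) (f (t - s)) s := by
      simpa using ((hF (t - s)).comp_const_sub t s).fun_neg
    simpa using abs_integral_mul_rpow_le_of_hasDerivAt (sub_nonpos.2 hθ1) one_pos ht1 hF'
      (by fun_prop) (fun s => (abs_neg (F (t - s))).trans_le (hN _))
  rw [← intervalIntegral.integral_add_adjacent_intervals (hint 0 1) (hint 1 t)]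
  exact (abs_add_le _ _).trans (add_le_add (hnear 1 zero_le_one le_rfl) hfar)

section OrderTwo

variable {a : ℝ}

lemma mlKernel_two_one (ha : 0 ≤ a) {t : ℝ} (ht : 0 < t) :
    mlKernel (-a) 2 1 t = Real.cos (√a * t) := by
  rw [mlKernel, ← (Real.hasSum_cos (√a * t)).tsum_eq]
  refine tsum_congr fun j => ?_
  have hj : (1 : ℝ) + 2 * j = (2 * j : ℕ) + 1 := by push_cast; ring
  rw [rlKernel_of_pos ht, hj, add_sub_cancel_right, Real.rpow_natCast, Real.Gamma_nat_eq_factorial,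
    mul_pow, pow_mul (√a), Real.sq_sqrt ha, neg_pow a]
  ring

lemma mlKernel_two_two (ha : 0 < a) {t : ℝ} (ht : 0 < t) :
    mlKernel (-a) 2 2 t = Real.sin (√a * t) / √a := by
  have hs : √a ≠ 0 := (Real.sqrt_pos.2 ha).ne'
  rw [mlKernel, ← (Real.hasSum_sin (√a * t)).tsum_eq, ← tsum_div_const]
  refine tsum_congr fun j => ?_
  have hj : (2 : ℝ) + 2 * j = (2 * j + 1 : ℕ) + 1 := by push_cast; ring
  rw [rlKernel_of_pos ht, hj, add_sub_cancel_right, Real.rpow_natCast, Real.Gamma_nat_eq_factorial,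
    mul_pow, pow_succ (√a), pow_mul (√a), Real.sq_sqrt ha.le, neg_pow a]
  field_simp

lemma mlKernel_two_three (ha : 0 < a) {t : ℝ} (ht : 0 < t) :
    mlKernel (-a) 2 3 t = (1 - Real.cos (√a * t)) / a := by
  have h := mlKernel_eq_rlKernel_add (-a) two_pos one_pos t
  rw [mlKernel_two_one ha.le ht, rlKernel_of_pos ht, sub_self, Real.rpow_zero, Real.Gamma_one,
    div_one, (by norm_num : (1 : ℝ) + 2 = 3)] at h
  rw [eq_div_iff ha.ne']
  linarith

lemma mlKernel_two_three_nonneg (ha : 0 < a) (t : ℝ) : 0 ≤ mlKernel (-a) 2 3 t := by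
  rcases le_or_gt t 0 with ht | ht
  · rw [mlKernel_of_nonpos ht]
  · rw [mlKernel_two_three ha ht]
    exact div_nonneg (sub_nonneg.2 (Real.cos_le_one _)) ha.le

lemma mlKernel_two_nonneg (ha : 0 < a) {κ : ℝ} (hκ : 3 ≤ κ) (t : ℝ) : 0 ≤ mlKernel (-a) 2 κ t := by
  rcases hκ.eq_or_lt with rfl | hκ
  · exact mlKernel_two_three_nonneg ha t
  rcases le_or_gt t 0 with ht | ht
  · rw [mlKernel_of_nonpos ht]
  · rw [← add_sub_cancel 3 κ, ← rlInt_mlKernel (-a) two_pos three_pos (sub_pos.2 hκ) ht.le]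
    exact rlInt_nonneg (sub_nonneg.2 hκ.le) ht.le fun s _ => mlKernel_two_three_nonneg ha s

lemma exists_abs_mlKernel_two_le_of_le_two (ha : 0 < a) {κ : ℝ} (hκ1 : 1 < κ) (hκ2 : κ ≤ 2) :
    ∃ C, ∀ t > 0, |mlKernel (-a) 2 κ t| ≤ C := by
  have hs : 0 < √a := Real.sqrt_pos.2 ha
  have hsin (s : ℝ) : HasDerivAt (fun s => Real.sin (√a * s) / √a) (Real.cos (√a * s)) s := by
    simpa [hs.ne'] using ((hasDerivAt_id s).const_mul √a).sin.div_const √a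
  have hsinle (s : ℝ) : |Real.sin (√a * s) / √a| ≤ 1 / √a := by
    rw [abs_div, abs_of_pos hs]
    gcongr
    exact Real.abs_sin_le_one _
  refine ⟨(1 / (κ - 1) + 2 * (1 / √a)) / Real.Gamma (κ - 1), fun t ht => ?_⟩
  rw [← add_sub_cancel 1 κ, ← rlInt_mlKernel (-a) two_pos one_pos (sub_pos.2 hκ1) ht.le,
    rlInt_congr ht.le fun s hs => mlKernel_two_one ha.le hs.1, add_sub_cancel_left]
  exact abs_rlInt_le_of_hasDerivAt (sub_pos.2 hκ1) (by linarith) ht.le hsin (by fun_prop)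
    (fun s => Real.abs_cos_le_one _) hsinle

lemma exists_abs_mlKernel_two_le_of_le_three (ha : 0 < a) {κ : ℝ} (hκ2 : 2 < κ) (hκ3 : κ ≤ 3) :
    ∃ C, ∀ t > 0, |mlKernel (-a) 2 κ t| ≤ C := by
  have hs : 0 < √a := Real.sqrt_pos.2 ha
  have hcos (s : ℝ) : HasDerivAt (fun s => -Real.cos (√a * s) / a) (Real.sin (√a * s) / √a) s := by
    have hval : Real.sin (√a * s) / √a = -(-Real.sin (√a * s) * √a) / a := by
      rw [div_eq_div_iff hs.ne' ha.ne']
      linear_combination -Real.sin (√a * s) * Real.mul_self_sqrt ha.le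
    rw [hval]
    simpa using ((hasDerivAt_id s).const_mul √a).cos.fun_neg.div_const a
  have hcosle (s : ℝ) : |-Real.cos (√a * s) / a| ≤ 1 / a := by
    rw [abs_div, abs_of_pos ha, abs_neg]
    gcongr
    exact Real.abs_cos_le_one _
  have hsinle (s : ℝ) : |Real.sin (√a * s) / √a| ≤ 1 / √a := by
    rw [abs_div, abs_of_pos hs]
    gcongr
    exact Real.abs_sin_le_one _
  refine ⟨(1 / √a / (κ - 2) + 2 * (1 / a)) / Real.Gamma (κ - 2), fun t ht => ?_⟩
  rw [← add_sub_cancel 2 κ, ← rlInt_mlKernel (-a) two_pos two_pos (sub_pos.2 hκ2) ht.le,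
    rlInt_congr ht.le fun s hs => mlKernel_two_two ha hs.1, add_sub_cancel_left]
  exact abs_rlInt_le_of_hasDerivAt (sub_pos.2 hκ2) (by linarith) ht.le hcos (by fun_prop)
    hsinle hcosle

lemma abs_mlKernel_two_le_of_three_lt (ha : 0 < a) {κ t : ℝ} (hκ : 3 < κ) (ht : 0 < t) :
    |mlKernel (-a) 2 κ t| ≤ 2 / a * rlKernel (κ - 2) t := by
  have hle : ∀ s ∈ Set.Ioc 0 t, |mlKernel (-a) 2 3 s| ≤ 2 / a := by
    intro s hs
    rw [abs_of_nonneg (mlKernel_two_three_nonneg ha s), mlKernel_two_three ha hs.1]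
    gcongr
    linarith [Real.neg_one_le_cos (√a * s)]
  have h := abs_rlInt_le (sub_pos.2 hκ) ht.le hle
  rwa [rlInt_mlKernel (-a) two_pos three_pos (sub_pos.2 hκ) ht.le, add_sub_cancel,
    (by ring : κ - 3 + 1 = κ - 2)] at h

lemma exists_abs_mlKernel_two_le (ha : 0 < a) {κ : ℝ} (hκ : 1 < κ) :
    ∃ C, ∀ t > 0, |mlKernel (-a) 2 κ t| ≤ C * rlKernel (max 1 (κ - 2)) t := by
  rcases lt_or_ge 3 κ with h3 | h3
  · rw [max_eq_right (by linarith)]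
    exact ⟨2 / a, fun t ht => abs_mlKernel_two_le_of_three_lt ha h3 ht⟩
  · have hbdd : ∃ C, ∀ t > 0, |mlKernel (-a) 2 κ t| ≤ C := by
      rcases le_or_gt κ 2 with h2 | h2
      · exact exists_abs_mlKernel_two_le_of_le_two ha hκ h2
      · exact exists_abs_mlKernel_two_le_of_le_three ha h2 h3
    obtain ⟨C, hC⟩ := hbdd
    refine ⟨C, fun t ht => ?_⟩
    rw [max_eq_left (by linarith), rlKernel_of_pos ht, sub_self, Real.rpow_zero, Real.Gamma_one,
      div_one, mul_one]
    exact hC t ht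

end OrderTwo

section OrderLeTwo

variable {a α σ : ℝ}

lemma mlKernel_nonneg (ha : 0 < a) (hα0 : 0 < α) (hα2 : α ≤ 2) (hσ : 3 * (α / 2) ≤ σ) (t : ℝ) :
    0 ≤ mlKernel (-a) α σ t := by
  rcases le_or_gt t 0 with ht | ht
  · rw [mlKernel_of_nonpos ht]
  have hμ : 0 < α / 2 := half_pos hα0
  have hκ : 3 ≤ σ / (α / 2) := (le_div_iff₀ hμ).2 hσ
  have h := nonneg_rlKernel_add_mlKernel_of_subordination (c := -a) (ρ := 2)
    (κ := σ / (α / 2)) (η := 1) (C := 0) (e := 1) hμ (by linarith) two_pos (by linarith) one_pos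
    ht fun τ _ => by
      rw [zero_mul, zero_add, one_mul]
      exact mlKernel_two_nonneg ha hκ τ
  rwa [zero_mul, one_mul, zero_add, mul_div_cancel₀ _ hμ.ne', div_mul_cancel₀ _ two_ne_zero] at h

lemma exists_abs_mlKernel_le (ha : 0 < a) (hα0 : 0 < α) (hα2 : α ≤ 2) (hσ : α / 2 < σ) :
    ∃ C, ∀ t > 0, |mlKernel (-a) α σ t| ≤ C * rlKernel (max (α / 2) (σ - α)) t := by
  have hμ : 0 < α / 2 := half_pos hα0
  have hκ : 1 < σ / (α / 2) := (one_lt_div hμ).2 hσ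
  obtain ⟨C, hC⟩ := exists_abs_mlKernel_two_le ha hκ
  have hη : α / 2 * max 1 (σ / (α / 2) - 2) = max (α / 2) (σ - α) := by
    rw [mul_max_of_nonneg _ _ hμ.le, mul_one, mul_sub, mul_div_cancel₀ _ hμ.ne',
      div_mul_cancel₀ _ two_ne_zero]
  refine ⟨C, fun t ht => ?_⟩
  have hsigned (e : ℝ) (he : |e| = 1) :
      0 ≤ C * rlKernel (max (α / 2) (σ - α)) t + e * mlKernel (-a) α σ t := by
    have h := nonneg_rlKernel_add_mlKernel_of_subordination (c := -a) (ρ := 2) (C := C) (e := e)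
      (κ := σ / (α / 2)) (η := max 1 (σ / (α / 2) - 2)) hμ (by linarith) two_pos (by linarith)
      (lt_max_of_lt_left one_pos) ht fun τ hτ => by
        have := neg_abs_le (e * mlKernel (-a) 2 (σ / (α / 2)) τ)
        rw [abs_mul, he, one_mul] at this
        linarith [hC τ hτ]
    rwa [hη, mul_div_cancel₀ _ hμ.ne', div_mul_cancel₀ _ two_ne_zero] at h
  rw [abs_le]
  constructor
  · linarith [hsigned 1 (by simp)]
  · linarith [hsigned (-1) (by simp)]

lemma isLittleO_rpow_rpow_atTop {p q : ℝ} (hpq : p < q) :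
    (fun t : ℝ => t ^ p) =o[atTop] fun t : ℝ => t ^ q := by
  have h := tendsto_rpow_neg_atTop (sub_pos.2 hpq)
  refine Asymptotics.isLittleO_of_tendsto' ?_ (h.congr' ?_)
  · filter_upwards [eventually_gt_atTop 0] with t ht h0
    exact absurd h0 (by positivity)
  · filter_upwards [eventually_gt_atTop 0] with t ht
    rw [neg_sub, Real.rpow_sub ht]

lemma isLittleO_mlKernel (ha : 0 < a) (hα0 : 0 < α) (hα2 : α ≤ 2) (hσ : α / 2 < σ) {ν : ℝ}
    (hν : max (α / 2) (σ - α) < ν) :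
    mlKernel (-a) α σ =o[atTop] fun t : ℝ => t ^ (ν - 1) := by
  obtain ⟨C, hC⟩ := exists_abs_mlKernel_le ha hα0 hα2 hσ
  have hO : mlKernel (-a) α σ =O[atTop] fun t : ℝ => t ^ (max (α / 2) (σ - α) - 1) := by
    refine Asymptotics.IsBigO.of_bound (C / Real.Gamma (max (α / 2) (σ - α))) ?_
    filter_upwards [eventually_gt_atTop 0] with t ht
    rw [Real.norm_eq_abs, Real.norm_of_nonneg (by positivity)]
    refine (hC t ht).trans_eq ?_
    rw [rlKernel_of_pos ht]
    ring
  exact hO.trans_isLittleO (isLittleO_rpow_rpow_atTop (by linarith))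

end OrderLeTwo

/-! ### Variation of constants -/

lemma sub_eq_integral_deriv_deriv {G x : ℝ → ℝ} {t : ℝ} (ht : 0 ≤ t)
    (hx : ContinuousOn x (Set.Ici 0)) (hG : ∀ s ≥ 0, G s = ∫ r in (0 : ℝ)..s, x r)
    (hAC : AC2On G t) :
    x t - x 0 = ∫ s in (0 : ℝ)..t, deriv (deriv G) s := by
  have hderiv (s : ℝ) (hs : s ∈ Set.Icc 0 t) : deriv G s = x s := by
    have hint : IntervalIntegrable x volume 0 s :=
      (hx.mono (by rw [Set.uIcc_of_le hs.1]; exact Set.Icc_subset_Ici_self)).intervalIntegrable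
    have hmono : Set.Ioi s ⊆ Set.Ici 0 := fun r hr => hs.1.trans hr.le
    have hright : HasDerivWithinAt G (x s) (Set.Ici s) s :=
      (intervalIntegral.integral_hasDerivWithinAt_right hint
        ((hx.mono hmono).stronglyMeasurableAtFilter_nhdsWithin measurableSet_Ioi s)
        ((hx s hs.1).mono hmono)).congr (fun r hr => hG r (hs.1.trans hr)) (hG s hs.1)
    exact (uniqueDiffWithinAt_Ici s).eq_deriv _ (hAC.1 s hs).hasDerivAt.hasDerivWithinAt hright
  rw [← hderiv t ⟨ht, le_rfl⟩, ← hderiv 0 ⟨le_rfl, ht⟩, hAC.2.2 t ⟨ht, le_rfl⟩, add_sub_cancel_left]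

lemma rlInt_one_deriv_sub {w : ℝ → ℝ} (hw : ContDiff ℝ 1 w) (m t : ℝ) :
    rlInt 1 (fun s => deriv w s - m) t = w t - m * t - w 0 := by
  rw [rlInt_one, intervalIntegral.integral_sub ((hw.continuous_deriv le_rfl).intervalIntegrable _ _)
    intervalIntegrable_const, intervalIntegral.integral_deriv_eq_sub
    (fun s _ => hw.differentiable one_ne_zero s)
    ((hw.continuous_deriv le_rfl).intervalIntegrable _ _),
    intervalIntegral.integral_const, sub_zero, smul_eq_mul]
  ring

lemma rlInt_two_sub_deriv_sub {α t : ℝ} (hα2 : α < 2) {w : ℝ → ℝ} (hw : ContDiff ℝ 1 w)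
    (ht : 0 ≤ t) (hAC : AC2On (capKernel α w) t) :
    rlInt (2 - α) (fun s => deriv w s - deriv w 0) t = ∫ s in (0 : ℝ)..t, caputoD α w s := by
  have hv : Continuous fun s => deriv w s - deriv w 0 :=
    (hw.continuous_deriv le_rfl).sub continuous_const
  have hθ : 0 < 2 - α := sub_pos.2 hα2
  have hG (s : ℝ) (hs : s ≥ 0) : capKernel α w s
      = ∫ r in (0 : ℝ)..s, rlInt (2 - α) (fun r => deriv w r - deriv w 0) r := by
    rw [capKernel, if_neg hα2.ne, ← rlInt_one,
      rlInt_rlInt one_pos hθ (by linarith) hs (hv.intervalIntegrable _ _), add_comm,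
      ← rlInt_rlInt hθ one_pos (by linarith) hs (hv.intervalIntegrable _ _)]
    exact rlInt_congr hs fun r _ => (rlInt_one_deriv_sub hw _ r).symm
  have h := sub_eq_integral_deriv_deriv ht (continuousOn_rlInt hθ hv) hG hAC
  rwa [show rlInt (2 - α) _ 0 = 0 by simp [rlInt], sub_zero] at h

lemma eq_add_rlInt_caputoD {α t : ℝ} (hα1 : 1 < α) (hα2 : α ≤ 2) {w : ℝ → ℝ} (hw : ContDiff ℝ 1 w)
    (hAC : ∀ T > 0, AC2On (capKernel α w) T) (ht : 0 < t) :
    w t = w 0 + deriv w 0 * t + rlInt α (caputoD α w) t := by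
  have hh : IntervalIntegrable (caputoD α w) volume 0 t := (hAC t ht).2.1
  have hv : Continuous fun s => deriv w s - deriv w 0 :=
    (hw.continuous_deriv le_rfl).sub continuous_const
  suffices h : rlInt 1 (fun s => deriv w s - deriv w 0) t = rlInt α (caputoD α w) t by
    rw [← h, rlInt_one_deriv_sub hw]
    ring
  rcases hα2.eq_or_lt with rfl | hα2
  · have hderiv (s : ℝ) (hs : s ∈ Set.Ioo 0 t) :
        deriv w s - deriv w 0 = rlInt 1 (caputoD 2 w) s := by
      have h := (hAC s hs.1).2.2 s ⟨hs.1.le, le_rfl⟩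
      rw [rlInt_one, sub_eq_iff_eq_add']
      simpa only [capKernel, caputoD, if_true] using h
    rw [rlInt_congr ht.le hderiv, rlInt_rlInt one_pos one_pos (by norm_num) ht.le hh,
      one_add_one_eq_two]
  · calc rlInt 1 (fun s => deriv w s - deriv w 0) t
        = rlInt (α - 1 + (2 - α)) (fun s => deriv w s - deriv w 0) t := by
          rw [show α - 1 + (2 - α) = 1 by ring]
      _ = rlInt (α - 1) (rlInt (2 - α) fun s => deriv w s - deriv w 0) t :=
          (rlInt_rlInt (sub_pos.2 hα1) (sub_pos.2 hα2) (by linarith) ht.le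
            (hv.intervalIntegrable _ _)).symm
      _ = rlInt (α - 1) (rlInt 1 (caputoD α w)) t :=
          rlInt_congr ht.le fun s hs => by
            rw [rlInt_one, rlInt_two_sub_deriv_sub hα2 hw hs.1.le (hAC s hs.1)]
      _ = rlInt α (caputoD α w) t := by
          rw [rlInt_rlInt (sub_pos.2 hα1) one_pos (by linarith) ht.le hh, sub_add_cancel]

lemma intervalIntegrable_rlKernel {σ : ℝ} (hσ : 1 ≤ σ) (x y : ℝ) :
    IntervalIntegrable (rlKernel σ) volume x y :=
  Monotone.intervalIntegrable fun _ _ => rlKernel_le_rlKernel hσ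

section VariationOfConstants

variable {c ρ β t : ℝ} {h : ℝ → ℝ}

lemma rlInt_affine_add_rlInt (x y : ℝ) (hρ : 0 < ρ) (hβ : 0 < β) (hβρ : 1 ≤ β + ρ) (ht : 0 ≤ t)
    (hh : IntervalIntegrable h volume 0 t) :
    rlInt β (fun s => x * rlKernel 1 s + y * rlKernel 2 s + rlInt ρ h s) t
      = x * rlKernel (β + 1) t + y * rlKernel (β + 2) t + rlInt (β + ρ) h t := by
  have hint (z : ℝ) {θ : ℝ} (hθ : 0 < θ) :
      IntervalIntegrable (fun s => rlKernel β (t - s) * (z * rlKernel θ s)) volume 0 t := by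
    simpa only [mul_left_comm _ z] using
      (integrable_rlKernel_sub_mul_rlKernel hβ hθ t).intervalIntegrable.const_mul z
  rw [rlInt_add ht, rlInt_add ht (hint x one_pos) (hint y two_pos), rlInt_const_mul,
    rlInt_const_mul, rlInt_rlKernel hβ one_pos ht, rlInt_rlKernel hβ two_pos ht,
    rlInt_rlInt hβ hρ hβρ ht hh]
  · simpa only [mul_add] using (hint x one_pos).add (hint y two_pos)
  · exact intervalIntegrable_rlKernel_sub_mul_rlInt hβ hρ hβρ ht hh

lemma mlConv_affine_add_rlInt (x y : ℝ) {σ : ℝ} (hρ : 0 < ρ) (hσ : 1 ≤ σ) (ht : 0 ≤ t)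
    (hh : IntervalIntegrable h volume 0 t) :
    mlConv c ρ σ (fun s => x * rlKernel 1 s + y * rlKernel 2 s + rlInt ρ h s) t
      = x * mlKernel c ρ (σ + 1) t + y * mlKernel c ρ (σ + 2) t + mlConv c ρ (σ + ρ) h t := by
  have hσ0 : 0 < σ := by linarith
  have hint (z : ℝ) {θ : ℝ} (hθ : 1 ≤ θ) :
      IntervalIntegrable (fun s => z * rlKernel θ s) volume 0 t :=
    (intervalIntegrable_rlKernel hθ 0 t).const_mul z
  rw [mlConv_add hρ hσ ht ((hint x le_rfl).add (hint y one_le_two))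
      (intervalIntegrable_rlInt hρ ht hh),
    mlConv_add hρ hσ ht (hint x le_rfl) (hint y one_le_two), mlConv_const_mul, mlConv_const_mul,
    mlConv_rlKernel c hρ hσ0 one_pos ht, mlConv_rlKernel c hρ hσ0 two_pos ht,
    mlConv_rlInt c hρ hσ hρ ht hh]

/-- Inserting `w = x + y s + I^ρ h` into the convolution makes its series telescope. -/
lemma rlInt_eq_mlKernel_add_mlConv {x y : ℝ} (c : ℝ) {w : ℝ → ℝ} (hρ : 0 < ρ) (hβ : 0 < β)
    (hβρ : 1 ≤ β + ρ) (ht : 0 ≤ t) (hh : IntervalIntegrable h volume 0 t)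
    (hw : IntervalIntegrable w volume 0 t)
    (hrep : ∀ s ∈ Set.Ioo 0 t, w s = x + y * s + rlInt ρ h s) :
    rlInt β w t = x * mlKernel c ρ (β + 1) t + y * mlKernel c ρ (β + 2) t
      + mlConv c ρ (β + ρ) (fun s => h s + -c * w s) t := by
  have hrep' (s : ℝ) (hs : s ∈ Set.Ioo 0 t) :
      w s = x * rlKernel 1 s + y * rlKernel 2 s + rlInt ρ h s := by
    rw [hrep s hs, rlKernel_of_pos hs.1, rlKernel_of_pos hs.1]
    norm_num
  rw [mlConv_add hρ hβρ ht hh (hw.const_mul _), mlConv_const_mul, mlConv_congr ht hrep',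
    mlConv_affine_add_rlInt x y hρ hβρ ht hh, rlInt_congr ht hrep',
    rlInt_affine_add_rlInt x y hρ hβ hβρ ht hh, mlConv_eq_rlInt_add c hρ hβρ ht hh,
    mlKernel_eq_rlKernel_add c hρ (by linarith : 0 < β + 1),
    mlKernel_eq_rlKernel_add c hρ (by linarith : 0 < β + 2), add_right_comm β 1, add_right_comm β 2]
  ring

end VariationOfConstants

/-! ### Lower bounds -/

lemma min_mul_rpow_le_sub_rpow {t s : ℝ} (q : ℝ) (ht : 0 < t) (hs0 : 0 ≤ s) (hs : 2 * s ≤ t) :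
    min 1 ((1 / 2 : ℝ) ^ q) * t ^ q ≤ (t - s) ^ q := by
  rcases le_total 0 q with hq | hq
  · calc min 1 ((1 / 2 : ℝ) ^ q) * t ^ q ≤ (1 / 2 : ℝ) ^ q * t ^ q := by
          gcongr
          exact min_le_right _ _
      _ = (1 / 2 * t) ^ q := (Real.mul_rpow (by norm_num) ht.le).symm
      _ ≤ (t - s) ^ q := Real.rpow_le_rpow (by positivity) (by linarith) hq
  · calc min 1 ((1 / 2 : ℝ) ^ q) * t ^ q ≤ 1 * t ^ q := by
          gcongr
          exact min_le_left _ _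
      _ = t ^ q := one_mul _
      _ ≤ (t - s) ^ q := Real.rpow_le_rpow_of_nonpos (by linarith) (by linarith) hq

lemma exists_pos_eventually_rpow_le_integral_comp_sub_mul {k φ : ℝ → ℝ} {c q : ℝ} (hc : 0 < c)
    (hk : ∀ t, 0 ≤ k t) (hlow : ∀ᶠ t in atTop, c * t ^ q ≤ k t)
    (hφ : Continuous φ) (hφ0 : ∀ s, 0 ≤ φ s) (hne : ∃ t, 0 ≤ t ∧ φ t ≠ 0)
    (hint : ∀ t ≥ 0, IntervalIntegrable (fun s => k (t - s) * φ s) volume 0 t) :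
    ∃ d > 0, ∀ᶠ t in atTop, d * t ^ q ≤ ∫ s in (0 : ℝ)..t, k (t - s) * φ s := by
  obtain ⟨T, hT⟩ := eventually_atTop.1 hlow
  obtain ⟨t₀, ht₀, hφt₀⟩ := hne
  set t₁ := t₀ + 1
  have ht₁ : 0 < t₁ := by positivity
  have hφint : 0 < ∫ s in (0 : ℝ)..t₁, φ s :=
    intervalIntegral.integral_pos ht₁ hφ.continuousOn (fun s _ => hφ0 s)
      ⟨t₀, ⟨ht₀, (lt_add_one t₀).le⟩, (hφ0 t₀).lt_of_ne' hφt₀⟩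
  set m : ℝ := min 1 ((1 / 2 : ℝ) ^ q)
  have : 0 < m := lt_min one_pos (by positivity)
  refine ⟨c * m * ∫ s in (0 : ℝ)..t₁, φ s, by positivity, ?_⟩
  filter_upwards [eventually_ge_atTop (2 * t₁), eventually_ge_atTop (2 * T)] with t ht htT
  have ht0 : 0 < t := by linarith
  have htt₁ : t₁ ≤ t := by linarith
  have hint₁ : IntervalIntegrable (fun s => k (t - s) * φ s) volume 0 t₁ :=
    (hint t ht0.le).mono_set (Set.uIcc_subset_uIcc_left (Set.mem_uIcc_of_le ht₁.le htt₁))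
  calc c * m * (∫ s in (0 : ℝ)..t₁, φ s) * t ^ q
      = ∫ s in (0 : ℝ)..t₁, c * (m * t ^ q) * φ s := by
        rw [intervalIntegral.integral_const_mul]
        ring
    _ ≤ ∫ s in (0 : ℝ)..t₁, k (t - s) * φ s := by
        refine intervalIntegral.integral_mono_on ht₁.le ((hφ.intervalIntegrable _ _).const_mul _)
          hint₁ fun s hs => mul_le_mul_of_nonneg_right ?_ (hφ0 s)
        refine le_trans ?_ (hT (t - s) (by linarith [hs.2]))
        gcongr
        exact min_mul_rpow_le_sub_rpow q ht0 hs.1 (by linarith [hs.2])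
    _ ≤ ∫ s in (0 : ℝ)..t, k (t - s) * φ s :=
        intervalIntegral.integral_mono_interval le_rfl ht₁.le htt₁
          (ae_of_all _ fun s => mul_nonneg (hk _) (hφ0 s)) (hint t ht0.le)

lemma mlConv_mono {c ρ σ t : ℝ} {f g : ℝ → ℝ} (hρ : 0 < ρ) (hσ : 1 ≤ σ) (ht : 0 ≤ t)
    (hk : ∀ s, 0 ≤ mlKernel c ρ σ s) (hf : IntervalIntegrable f volume 0 t)
    (hg : IntervalIntegrable g volume 0 t) (hfg : ∀ᵐ s ∂volume.restrict (Set.Icc 0 t), f s ≤ g s) :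
    mlConv c ρ σ f t ≤ mlConv c ρ σ g t :=
  intervalIntegral.integral_mono_ae_restrict ht (intervalIntegrable_mlKernel_mul c hρ hσ ht hf)
    (intervalIntegrable_mlKernel_mul c hρ hσ ht hg)
    (hfg.mono fun s hs => mul_le_mul_of_nonneg_left hs (hk (t - s)))

section Growth

variable {a α ν : ℝ}

/-- In the recursion `a K_{ν+α} = k_ν - K_ν` the last term is of lower order. -/
lemma exists_pos_eventually_rpow_le_mlKernel (ha : 0 < a) (hα0 : 0 < α) (hα2 : α ≤ 2)
    (hν : α / 2 < ν) :
    ∃ c > 0, ∀ᶠ t in atTop, c * t ^ (ν - 1) ≤ mlKernel (-a) α (ν + α) t := by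
  have hν0 : 0 < ν := by linarith
  have := Real.Gamma_pos_of_pos hν0
  have hsmall := (isLittleO_mlKernel ha hα0 hα2 hν (max_lt hν (sub_lt_self ν hα0))).def
    (by positivity : 0 < 1 / (2 * Real.Gamma ν))
  refine ⟨1 / (2 * Real.Gamma ν) / a, by positivity, ?_⟩
  filter_upwards [hsmall, eventually_gt_atTop 0] with t hsmall ht
  rw [Real.norm_eq_abs, Real.norm_of_nonneg (by positivity)] at hsmall
  have hrec := mlKernel_eq_rlKernel_add (-a) hα0 hν0 t
  have hhalf : rlKernel ν t = 2 * (1 / (2 * Real.Gamma ν) * t ^ (ν - 1)) := by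
    rw [rlKernel_of_pos ht]
    field_simp
  rw [div_mul_eq_mul_div, div_le_iff₀ ha]
  linarith [le_abs_self (mlKernel (-a) α ν t)]

lemma exists_pos_eventually_rpow_le_mlConv (ha : 0 < a) (hα0 : 0 < α) (hα2 : α ≤ 2)
    (hν : α / 2 < ν) (hνα : 1 ≤ ν + α) {φ : ℝ → ℝ} (hφ : Continuous φ) (hφ0 : ∀ s, 0 ≤ φ s)
    (hne : ∃ t, 0 ≤ t ∧ φ t ≠ 0) :
    ∃ d > 0, ∀ᶠ t in atTop, d * t ^ (ν - 1) ≤ mlConv (-a) α (ν + α) φ t := by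
  obtain ⟨c, hc, hlow⟩ := exists_pos_eventually_rpow_le_mlKernel ha hα0 hα2 hν
  exact exists_pos_eventually_rpow_le_integral_comp_sub_mul hc
    (mlKernel_nonneg ha hα0 hα2 (by linarith)) hlow hφ hφ0 hne fun t ht =>
      intervalIntegrable_mlKernel_mul (-a) hα0 hνα ht (hφ.intervalIntegrable 0 t)

end Growth

lemma liminf_rpow_mul_pos {f : ℝ → ℝ} {d q : ℝ} (hd : 0 < d) (h : ∀ᶠ t in atTop, d * t ^ q ≤ f t) :
    0 < liminf (fun t : ℝ => ((t ^ (-q) * f t : ℝ) : EReal)) atTop := by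
  refine (EReal.coe_pos.2 hd).trans_le (le_liminf_of_le (by isBoundedDefault) ?_)
  filter_upwards [h, eventually_gt_atTop 0] with t h ht
  rw [EReal.coe_le_coe_iff, Real.rpow_neg ht.le, inv_mul_eq_div, le_div_iff₀ (by positivity)]
  exact h

section DifferentialInequality

variable {γ α β a b : ℝ} {w φ : ℝ → ℝ}

lemma mul_mlConv_le_of_caputoD_add_ge (hγ : 0 < γ) (hα1 : 1 < α) (hα2 : α ≤ 2) (ha : 0 < a)
    (hβ : α / 2 ≤ β) (hw : Continuous w) (hφ : Continuous φ)
    (hAC : ∀ T > 0, AC2On (capKernel α w) T)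
    (hineq : ∀ᵐ t ∂volume.restrict (Set.Ici 0), caputoD α w t + a * w t ≥ b * rlInt γ φ t)
    {t : ℝ} (ht : 0 < t) :
    b * mlConv (-a) α (β + γ + α) φ t
      ≤ mlConv (-a) α (β + α) (fun s => caputoD α w s + a * w s) t := by
  have hα0 : 0 < α := by linarith
  have hσ : 1 ≤ β + α := by linarith
  have hφint : IntervalIntegrable φ volume 0 t := hφ.intervalIntegrable _ _
  rw [add_right_comm, ← mlConv_rlInt (-a) hα0 hσ hγ ht.le hφint, ← mlConv_const_mul]
  exact mlConv_mono hα0 hσ ht.le (mlKernel_nonneg ha hα0 hα2 (by linarith))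
    ((intervalIntegrable_rlInt hγ ht.le hφint).const_mul b)
    ((hAC t ht).2.1.add ((hw.intervalIntegrable _ _).const_mul a))
    (ae_restrict_of_ae_restrict_of_subset Set.Icc_subset_Ici_self hineq)

lemma mlKernel_add_mlConv_le_rlInt (hγ : 0 < γ) (hα1 : 1 < α) (hα2 : α ≤ 2) (ha : 0 < a)
    (hβ : α / 2 ≤ β) (hw : ContDiff ℝ 1 w) (hφ : Continuous φ)
    (hAC : ∀ T > 0, AC2On (capKernel α w) T)
    (hineq : ∀ᵐ t ∂volume.restrict (Set.Ici 0), caputoD α w t + a * w t ≥ b * rlInt γ φ t)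
    (hw' : 0 ≤ deriv w 0) {t : ℝ} (ht : 0 < t) :
    w 0 * mlKernel (-a) α (β + 1) t + b * mlConv (-a) α (β + γ + α) φ t ≤ rlInt β w t := by
  have hα0 : 0 < α := by linarith
  have hrep := rlInt_eq_mlKernel_add_mlConv (h := caputoD α w) (-a) hα0
    (by linarith : 0 < β) (by linarith) ht.le (hAC t ht).2.1 (hw.continuous.intervalIntegrable _ _)
    fun s hs => eq_add_rlInt_caputoD hα1 hα2 hw hAC hs.1
  rw [neg_neg] at hrep
  have hlin : 0 ≤ deriv w 0 * mlKernel (-a) α (β + 2) t :=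
    mul_nonneg hw' (mlKernel_nonneg ha hα0 hα2 (by linarith) t)
  have hconv := mul_mlConv_le_of_caputoD_add_ge hγ hα1 hα2 ha hβ hw.continuous hφ hAC hineq ht
  linarith

end DifferentialInequality

theorem cor_liminf_pos_iii_general {γ α β a b : ℝ} {w φ : ℝ → ℝ}
    (hγ : 0 < γ) (hα1 : 1 < α) (hα2 : α ≤ 2) (ha : 0 < a) (hb : 0 < b)
    (hβ : α / 2 ≤ β) (hw : ContDiff ℝ 1 w) (hφ : Continuous φ) (hφ0 : ∀ s, 0 ≤ φ s)
    (hne : ∃ t, 0 ≤ t ∧ φ t ≠ 0) (hAC : ∀ T > 0, AC2On (capKernel α w) T)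
    (hineq : ∀ᵐ t ∂volume.restrict (Set.Ici 0), caputoD α w t + a * w t ≥ b * rlInt γ φ t)
    (hw' : 0 ≤ deriv w 0) :
    0 < liminf (fun t : ℝ => ((t ^ (1 - γ - β) * rlInt β w t : ℝ) : EReal)) atTop := by
  have hα0 : 0 < α := by linarith
  obtain ⟨d, hd, hlow⟩ := exists_pos_eventually_rpow_le_mlConv (ν := β + γ) ha hα0 hα2
    (by linarith) (by linarith) hφ hφ0 hne
  have hsmall := ((isLittleO_mlKernel (σ := β + 1) (ν := β + γ) ha hα0 hα2 (by linarith)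
    (max_lt (by linarith) (by linarith))).const_mul_left (w 0)).def (half_pos (mul_pos hb hd))
  rw [show 1 - γ - β = -(β + γ - 1) by ring]
  refine liminf_rpow_mul_pos (half_pos (mul_pos hb hd)) ?_
  filter_upwards [hlow, hsmall, eventually_gt_atTop 0] with t hlow hsmall ht
  have hle := mlKernel_add_mlConv_le_rlInt hγ hα1 hα2 ha hβ hw hφ hAC hineq hw' ht
  rw [Real.norm_eq_abs, Real.norm_of_nonneg (by positivity)] at hsmall
  have hmain := mul_le_mul_of_nonneg_left hlow hb.le
  linarith [neg_abs_le (w 0 * mlKernel (-a) α (β + 1) t)]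

/-- Corollary 2.5 (iii): for β ∈ [α/2, α), if w'(0) = 0 then liminf t^{1−γ−β} (₀I_t^β w)(t) > 0. -/
theorem cor_liminf_pos_iii
    (γ α p a b : ℝ) (w : ℝ → ℝ)
    (hγ : 0 < γ) (hα1 : 1 < α) (hα2 : α < 2) (hp : 1 < p) (ha : 0 < a) (hb : 0 < b)
    (hw : ContDiff ℝ 1 w)
    (hw0 : ∃ t : ℝ, 0 ≤ t ∧ w t ≠ 0)
    (hAC : ∀ T > (0:ℝ), AC2On (capKernel α w) T)
    (hineq : ∀ᵐ t ∂(volume.restrict (Set.Ici (0:ℝ))),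
      caputoD α w t + a * w t ≥ b * rlInt γ (fun s => |w s| ^ p) t)
    (β : ℝ) (hβ1 : α / 2 ≤ β) (hβ2 : β < α) (hw' : deriv w 0 = 0) :
    0 < liminf (fun t : ℝ => ((t ^ (1 - γ - β) * rlInt β w t : ℝ) : EReal)) atTop := by
  exact cor_liminf_pos_iii_general hγ hα1 hα2.le ha hb hβ1 hw
    (hw.continuous.abs.rpow_const fun _ => Or.inr (by linarith)) (fun _ => by positivity)
    (hw0.imp fun _ ⟨ht, hwt⟩ => ⟨ht, (Real.rpow_pos_of_pos (abs_pos.2 hwt) p).ne'⟩) hAC hineq hw'.ge
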